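/- Fix n, d ∈ ℕ, 1 ≤ p < ∞, and smooth vector fields X_1, …, X_d : ℝ^n → ℝ^n that are bounded, have bounded first derivatives, and are bracket generating. Then every point of ℝ^n has an open neighborhood W ⊆ ℝ^n together with continuous maps σ : W × W → L^p([0,∞), ℝ^d) and T : W × W → [0,∞) such that for all x, y ∈ W the trajectory of the control σ(x,y) starting at x, evaluated at time T(x,y), equals y, and such that σ(x,x) = 0 and T(x,x) = 0 for every x ∈ W. -/

import Mathlib

open MeasureTheory Set

noncomputable section

/-- The Lie bracket of two (smooth) vector fields on `ℝⁿ`: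
`[Y,Z](x) = DZ(x)Y(x) − DY(x)Z(x)`. -/
def lieBracketVF {n : ℕ}
    (Y Z : EuclideanSpace ℝ (Fin n) → EuclideanSpace ℝ (Fin n)) :
    EuclideanSpace ℝ (Fin n) → EuclideanSpace ℝ (Fin n) :=
  fun x => fderiv ℝ Z x (Y x) - fderiv ℝ Y x (Z x)

/-- The iterated Lie brackets of the family `X₁, …, X_d` (the bracket monomials of the
Lie algebra of vector fields generated by the family). -/
inductive IsIteratedBracket {n d : ℕ}
    (X : Fin d → EuclideanSpace ℝ (Fin n) → EuclideanSpace ℝ (Fin n)) :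
    (EuclideanSpace ℝ (Fin n) → EuclideanSpace ℝ (Fin n)) → Prop
  | base (i : Fin d) : IsIteratedBracket X (X i)
  | bracket (Y Z : EuclideanSpace ℝ (Fin n) → EuclideanSpace ℝ (Fin n)) :
      IsIteratedBracket X Y → IsIteratedBracket X Z →
      IsIteratedBracket X (lieBracketVF Y Z)

/-- The family `X₁, …, X_d` is bracket generating: at every point the values of its
iterated Lie brackets span `ℝⁿ`. -/
def BracketGenerating {n d : ℕ}
    (X : Fin d → EuclideanSpace ℝ (Fin n) → EuclideanSpace ℝ (Fin n)) : Prop :=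
  ∀ x : EuclideanSpace ℝ (Fin n),
    Submodule.span ℝ {v | ∃ Y, IsIteratedBracket X Y ∧ Y x = v} = ⊤

/-- Trajectory on `[0,∞)` of a control `u` starting at `x` for the (driftless) control
system determined by `X₁, …, X_d`. -/
def IsTrajectoryInf {n d : ℕ}
    (X : Fin d → EuclideanSpace ℝ (Fin n) → EuclideanSpace ℝ (Fin n))
    (x : EuclideanSpace ℝ (Fin n))
    (u : ℝ → EuclideanSpace ℝ (Fin d))
    (γ : ℝ → EuclideanSpace ℝ (Fin n)) : Prop :=
  ContinuousOn γ (Set.Ici 0) ∧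
    ∀ t ∈ Set.Ici (0:ℝ),
      γ t = x + ∫ s in (0:ℝ)..t, ∑ i, u s i • X i (γ s)

/-!
A composition of flows `exp (s Y₁) ∘ ⋯ ∘ exp (s Yₘ)` acts on smooth functions, asymptotically as
`s → 0`, through the product of the formal exponentials of the Lie derivatives along the `Yⱼ`. This
sends words in the letters `± Xᵢ`, seen as elements of a free group, to power series of operators.
If the series of two words begin with `1 + sᵏ Y` and `1 + sˡ Z`, that of their group commutator
begins with `1 + sᵏ⁺ˡ [Y, Z]`; hence every iterated bracket `Y` of degree `k` is the leading term of
some word, and `-Y` that of the inverse word. Running these words for the durations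
`(max c 0) ^ (1 / k)` and `(max (-c) 0) ^ (1 / k)` produces the displacement `c Y`, and the spanning
condition lets one realise every small displacement `v` up to an error `o(v)`, with durations that
depend continuously on `v` and are Hölder at `0`.

Starting at `x`, one applies this law repeatedly to the displacement still missing to `y`. The
remaining displacement is at least halved each time, so that the durations decay geometrically,
uniformly in `(x, y)`. As the control is bounded, its segments are then summable in `L^p`, which
gives both the control driving `x` to `y` in finite time and its continuous dependence on `(x, y)`.
-/

open Filter Asymptotics
open scoped Topology NNReal ENNReal ContDiff PowerSeries commutatorElement

section FormalExponential

variable {A : Type*} [Ring A]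

/-- The formal exponential `exp (X a) = ∑ Xᵐ aᵐ / m!` of an element `a` of a real algebra. -/
def formalExp [Algebra ℝ A] (a : A) : A⟦X⟧ :=
  PowerSeries.mk fun m ↦ (m.factorial : ℝ)⁻¹ • a ^ m

theorem coeff_formalExp [Algebra ℝ A] (a : A) (m : ℕ) :
    PowerSeries.coeff m (formalExp a) = (m.factorial : ℝ)⁻¹ • a ^ m :=
  PowerSeries.coeff_mk _ _

theorem succ_smul_coeff_succ_formalExp [Algebra ℝ A] (a : A) (m : ℕ) :
    ((m : ℝ) + 1) • PowerSeries.coeff (m + 1) (formalExp a) =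
      PowerSeries.coeff m (formalExp a) * a := by
  have h : ((m : ℝ) + 1) * ((m + 1).factorial : ℝ)⁻¹ = (m.factorial : ℝ)⁻¹ := by
    rw [Nat.factorial_succ]
    push_cast
    field_simp
  rw [coeff_formalExp, coeff_formalExp, smul_smul, h, pow_succ, smul_mul_assoc]

theorem formalExp_zero [Algebra ℝ A] : formalExp (0 : A) = 1 := by
  ext m
  rw [coeff_formalExp, PowerSeries.coeff_one]
  rcases eq_or_ne m 0 with rfl | hm
  · simp
  · simp [hm]

theorem formalExp_add [Algebra ℝ A] {a b : A} (h : Commute a b) :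
    formalExp (a + b) = formalExp a * formalExp b := by
  ext m
  rw [PowerSeries.coeff_mul, coeff_formalExp, h.add_pow', Finset.smul_sum]
  refine Finset.sum_congr rfl fun ⟨i, j⟩ hij ↦ ?_
  obtain rfl : i + j = m := by simpa using hij
  have hchoose : ((i + j).factorial : ℝ)⁻¹ * (i + j).choose i =
      (i.factorial : ℝ)⁻¹ * (j.factorial : ℝ)⁻¹ := by
    rw [Nat.cast_add_choose]
    field_simp
  simp only [coeff_formalExp, smul_mul_smul_comm, ← hchoose, mul_smul, Nat.cast_smul_eq_nsmul]

/-- The formal exponential as a unit of the ring of formal power series. -/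
def formalExpUnit [Algebra ℝ A] (a : A) : A⟦X⟧ˣ where
  val := formalExp a
  inv := formalExp (-a)
  val_inv := by rw [← formalExp_add (Commute.refl a).neg_right, add_neg_cancel, formalExp_zero]
  inv_val := by rw [← formalExp_add (Commute.refl a).neg_left, neg_add_cancel, formalExp_zero]

/-- The extension of a family `v` to signed letters: `(i, true)` stands for `v i` and `(i, false)`
for `-v i`, the convention of `FreeGroup`. -/
def signed {ι G : Type*} [Neg G] (v : ι → G) (a : ι × Bool) : G :=
  cond a.2 (v a.1) (-v a.1)

theorem map_signed {ι G H S : Type*} [AddGroup G] [AddGroup H] [FunLike S G H]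
    [AddMonoidHomClass S G H] (φ : S) (v : ι → G) (a : ι × Bool) :
    φ (signed v a) = signed (fun i ↦ φ (v i)) a := by
  obtain ⟨i, _ | _⟩ := a
  · exact map_neg φ (v i)
  · rfl

/-- The formal power series attached to an element of the free group, sending each generator to
the formal exponential of the corresponding element of `A`. -/
def formalExpLift {ι : Type*} [Algebra ℝ A] (a : ι → A) : FreeGroup ι →* A⟦X⟧ˣ :=
  FreeGroup.lift fun i ↦ formalExpUnit (a i)

theorem formalExpLift_apply {ι : Type*} [DecidableEq ι] [Algebra ℝ A] (a : ι → A)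
    (g : FreeGroup ι) :
    (formalExpLift a g : A⟦X⟧) = (g.toWord.map fun b ↦ formalExp (signed a b)).prod := by
  conv_lhs => rw [← FreeGroup.mk_toWord (x := g), formalExpLift, FreeGroup.lift_mk]
  rw [← Units.coeHom_apply, map_list_prod, List.map_map]
  congr 2
  ext1 ⟨i, _ | _⟩ <;> rfl

/-- The formal power series `a` is of the form `1 + c Xᵏ + O(Xᵏ⁺¹)`. -/
def HasLeadingTerm (a : A⟦X⟧) (k : ℕ) (c : A) : Prop :=
  ∃ e : A⟦X⟧, a = 1 + PowerSeries.X ^ k * e ∧ PowerSeries.constantCoeff e = c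

theorem hasLeadingTerm_formalExp [Algebra ℝ A] (a : A) : HasLeadingTerm (formalExp a) 1 a := by
  refine ⟨PowerSeries.mk fun m ↦ ((m + 1).factorial : ℝ)⁻¹ • a ^ (m + 1), ?_, ?_⟩
  · ext m
    cases m with
    | zero => simp [coeff_formalExp]
    | succ m => simp [coeff_formalExp, PowerSeries.coeff_one, PowerSeries.coeff_succ_X_mul]
  · rw [← PowerSeries.coeff_zero_eq_constantCoeff_apply, PowerSeries.coeff_mk]
    simp

namespace HasLeadingTerm

variable {a : A⟦X⟧} {k l : ℕ} {c d : A}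

theorem coeff_zero (h : HasLeadingTerm a k c) (hk : k ≠ 0) : PowerSeries.coeff 0 a = 1 := by
  obtain ⟨e, rfl, -⟩ := h
  simp [hk]

theorem coeff_eq_zero (h : HasLeadingTerm a k c) {m : ℕ} (hm : m ≠ 0) (hmk : m < k) :
    PowerSeries.coeff m a = 0 := by
  obtain ⟨e, rfl, -⟩ := h
  simp [PowerSeries.coeff_one, PowerSeries.coeff_X_pow_mul', hm, hmk.not_ge]

theorem coeff_self (h : HasLeadingTerm a k c) (hk : k ≠ 0) : PowerSeries.coeff k a = c := by
  obtain ⟨e, rfl, rfl⟩ := h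
  simp [PowerSeries.coeff_one, PowerSeries.coeff_X_pow_mul', hk]

theorem constantCoeff_eq_one (h : HasLeadingTerm a k c) (hk : k ≠ 0) :
    PowerSeries.constantCoeff a = 1 := by
  rw [← PowerSeries.coeff_zero_eq_constantCoeff_apply, h.coeff_zero hk]

theorem inv {u : A⟦X⟧ˣ} (h : HasLeadingTerm (u : A⟦X⟧) k c) (hk : k ≠ 0) :
    HasLeadingTerm (↑u⁻¹ : A⟦X⟧) k (-c) := by
  have hu0 := h.constantCoeff_eq_one hk
  have hinv0 : PowerSeries.constantCoeff (↑u⁻¹ : A⟦X⟧) = 1 := by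
    have h := congrArg PowerSeries.constantCoeff u.inv_mul
    rwa [map_mul, hu0, mul_one, map_one] at h
  obtain ⟨e, hu, rfl⟩ := h
  refine ⟨-(↑u⁻¹ * e), ?_, by simp [hinv0]⟩
  calc (↑u⁻¹ : A⟦X⟧) = ↑u⁻¹ * ((u : A⟦X⟧) - PowerSeries.X ^ k * e) := by rw [hu]; simp
    _ = 1 - ↑u⁻¹ * PowerSeries.X ^ k * e := by rw [mul_sub, u.inv_mul, mul_assoc]
    _ = 1 + PowerSeries.X ^ k * -(↑u⁻¹ * e) := by
      rw [← PowerSeries.X_pow_mul, mul_assoc, mul_neg, sub_eq_add_neg]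

theorem commutator {u v : A⟦X⟧ˣ} (hu : HasLeadingTerm (u : A⟦X⟧) k c) (hk : k ≠ 0)
    (hv : HasLeadingTerm (v : A⟦X⟧) l d) (hl : l ≠ 0) :
    HasLeadingTerm (↑⁅u, v⁆ : A⟦X⟧) (k + l) ⁅c, d⁆ := by
  have hu0 := (hu.inv hk).constantCoeff_eq_one hk
  have hv0 := (hv.inv hl).constantCoeff_eq_one hl
  obtain ⟨e, hue, rfl⟩ := hu
  obtain ⟨f, hvf, rfl⟩ := hv
  have hmul : (u : A⟦X⟧) * (v : A⟦X⟧) =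
      (v : A⟦X⟧) * (u : A⟦X⟧) + PowerSeries.X ^ (k + l) * (e * f - f * e) := by
    have hef : PowerSeries.X ^ k * e * (PowerSeries.X ^ l * f) =
        PowerSeries.X ^ (k + l) * (e * f) := by
      rw [mul_assoc, ← mul_assoc e, ← PowerSeries.X_pow_mul, pow_add]
      simp only [mul_assoc]
    have hfe : PowerSeries.X ^ l * f * (PowerSeries.X ^ k * e) =
        PowerSeries.X ^ (k + l) * (f * e) := by
      rw [mul_assoc, ← mul_assoc f, ← PowerSeries.X_pow_mul, add_comm, pow_add]
      simp only [mul_assoc]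
    rw [hue, hvf, mul_sub, ← hef, ← hfe]
    noncomm_ring
  refine ⟨(e * f - f * e) * ↑u⁻¹ * ↑v⁻¹, ?_, by simp [hu0, hv0, Ring.lie_def]⟩
  rw [commutatorElement_def, Units.val_mul, Units.val_mul, Units.val_mul, hmul]
  simp only [add_mul, mul_assoc, Units.mul_inv, one_mul]

end HasLeadingTerm

end FormalExponential

section LieDerivative

variable {E : Type*} [NormedAddCommGroup E] [NormedSpace ℝ E]

variable (E) in
/-- The space of smooth maps `E → E`, which plays two roles: its elements are vector fields on `E`
and also the (vector valued) observables on which vector fields act as derivations. -/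
def smoothMaps : Submodule ℝ (E → E) where
  carrier := {f | ContDiff ℝ ∞ f}
  add_mem' (hf : ContDiff ℝ ∞ _) (hg : ContDiff ℝ ∞ _) := show ContDiff ℝ ∞ _ from hf.add hg
  zero_mem' := show ContDiff ℝ ∞ _ from contDiff_const
  smul_mem' c _ (hf : ContDiff ℝ ∞ _) := show ContDiff ℝ ∞ _ from hf.const_smul c

theorem mem_smoothMaps {f : E → E} : f ∈ smoothMaps E ↔ ContDiff ℝ ∞ f := Iff.rfl

theorem contDiff_smoothMaps (f : smoothMaps E) : ContDiff ℝ ∞ f.1 := f.2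

theorem differentiable_smoothMaps (f : smoothMaps E) : Differentiable ℝ f.1 :=
  (contDiff_smoothMaps f).differentiable (by simp)

theorem contDiff_fderiv_smoothMaps_apply (f Y : smoothMaps E) :
    ContDiff ℝ ∞ fun x ↦ fderiv ℝ f.1 x (Y.1 x) :=
  ((contDiff_smoothMaps f).fderiv_right (by simp)).clm_apply (contDiff_smoothMaps Y)

/-- The Lie derivative `L_Y f = Df(·) Y(·)` of a smooth map along a smooth vector field. -/
def lieDeriv : smoothMaps E →ₗ[ℝ] Module.End ℝ (smoothMaps E) :=
  LinearMap.mk₂ ℝ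
    (fun Y f ↦ ⟨fun x ↦ fderiv ℝ f.1 x (Y.1 x), contDiff_fderiv_smoothMaps_apply f Y⟩)
    (fun Y Z f ↦ Subtype.ext <| funext fun x ↦ map_add (fderiv ℝ f.1 x) (Y.1 x) (Z.1 x))
    (fun c Y f ↦ Subtype.ext <| funext fun x ↦ map_smul (fderiv ℝ f.1 x) c (Y.1 x))
    (fun Y f g ↦ Subtype.ext <| funext fun x ↦ DFunLike.congr_fun
      (fderiv_add (differentiable_smoothMaps f x) (differentiable_smoothMaps g x))
      (Y.1 x))
    (fun c Y f ↦ Subtype.ext <| funext fun x ↦ DFunLike.congr_fun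
      (fderiv_const_smul (differentiable_smoothMaps f x) c) (Y.1 x))

theorem lieDeriv_apply (Y f : smoothMaps E) (x : E) :
    (lieDeriv Y f).1 x = fderiv ℝ f.1 x (Y.1 x) := rfl

theorem lieDeriv_id (Y : smoothMaps E) (x : E) :
    (lieDeriv Y ⟨id, mem_smoothMaps.2 contDiff_id⟩).1 x = Y.1 x := by
  simp [lieDeriv_apply]

theorem lieBracket_mem_smoothMaps {Y Z : E → E} (hY : Y ∈ smoothMaps E) (hZ : Z ∈ smoothMaps E) :
    VectorField.lieBracket ℝ Y Z ∈ smoothMaps E :=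
  (contDiff_fderiv_smoothMaps_apply ⟨Z, hZ⟩ ⟨Y, hY⟩).sub
    (contDiff_fderiv_smoothMaps_apply ⟨Y, hY⟩ ⟨Z, hZ⟩)

theorem lieDeriv_lieBracket (Y Z : smoothMaps E) :
    lieDeriv ⟨_, lieBracket_mem_smoothMaps Y.2 Z.2⟩ = ⁅lieDeriv Y, lieDeriv Z⁆ := by
  ext f x
  exact VectorField.fderiv_apply_lieBracket (n := ∞) (contDiff_smoothMaps f).contDiffAt
    (by simpa using WithTop.coe_le_coe.2 (le_top : (2 : ℕ∞) ≤ ⊤))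
    (differentiable_smoothMaps Z x) (differentiable_smoothMaps Y x)

end LieDerivative

section Flow

variable {E : Type*} [NormedAddCommGroup E] [NormedSpace ℝ E] {V : E → E} {F : ℝ → E → E}

/-- `F s x` is the flow of the vector field `V` at time `s ∈ [0, 1]` starting at `x`. Nothing is
required of the derivative of `F` at other times. -/
structure IsFlow (V : E → E) (F : ℝ → E → E) : Prop where
  continuous : Continuous ↿F
  map_zero : ∀ x, F 0 x = x
  hasDerivWithinAt : ∀ x, ∀ s ∈ Icc (0 : ℝ) 1,
    HasDerivWithinAt (F · x) (V (F s x)) (Icc 0 1) s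

theorem exists_forall_hasDerivWithinAt_Icc [CompleteSpace E] {K : ℝ≥0} (hK : LipschitzWith K V)
    {C : ℝ} (hV : ∀ y, ‖V y‖ ≤ C) (x : E) :
    ∃ α : ℝ → E, α 0 = x ∧
      ∀ s ∈ Icc (0 : ℝ) 1, HasDerivWithinAt α (V (α s)) (Icc 0 1) s :=
  have hC : 0 ≤ C := (norm_nonneg _).trans (hV x)
  (IsPicardLindelof.of_time_independent (f := V) (tmin := 0) (tmax := 1) (t₀ := ⟨0, by simp⟩)
    (x₀ := x) (a := C.toNNReal) (r := 0) (L := C.toNNReal) (K := K)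
    (fun y _ ↦ by simpa [hC] using hV y) hK.lipschitzOnWith (by simp)
    ).exists_eq_forall_mem_Icc_hasDerivWithinAt₀

theorem exists_isFlow [CompleteSpace E] {K : ℝ≥0} (hK : LipschitzWith K V)
    {C : ℝ} (hV : ∀ y, ‖V y‖ ≤ C) : ∃ F, IsFlow V F := by
  choose α hα₀ hα using exists_forall_hasDerivWithinAt_Icc hK hV
  have hcont (x : E) : ContinuousOn (α x) (Icc 0 1) := fun s hs ↦ (hα x s hs).continuousWithinAt
  have hderivIci (x : E) : ∀ t ∈ Ico (0 : ℝ) 1, HasDerivWithinAt (α x) (V (α x t)) (Ici t) t :=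
    fun t ht ↦ (hα x t (Ico_subset_Icc_self ht)).mono_of_mem_nhdsWithin (Icc_mem_nhdsGE_of_mem ht)
  have hlip (s : ℝ) (hs : s ∈ Icc (0 : ℝ) 1) :
      LipschitzWith (Real.exp K).toNNReal fun x ↦ α x s := by
    refine LipschitzWith.of_dist_le_mul fun x y ↦ ?_
    calc dist (α x s) (α y s) ≤ dist x y * Real.exp (K * (s - 0)) :=
          dist_le_of_trajectories_ODE (fun _ ↦ hK) (hcont x) (hderivIci x) (hcont y)
            (hderivIci y) (by rw [hα₀, hα₀]) s hs
      _ ≤ (Real.exp K).toNNReal * dist x y := by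
          rw [Real.coe_toNNReal _ (Real.exp_pos _).le, mul_comm]
          gcongr
          nlinarith [K.2, hs.1, hs.2]
  refine ⟨fun s x ↦ α x (projIcc 0 1 zero_le_one s), ?_, fun x ↦ ?_, fun x s hs ↦ ?_⟩
  · refine continuous_prod_of_continuous_lipschitzWith' _ (Real.exp K).toNNReal
      (fun s ↦ hlip _ (projIcc 0 1 zero_le_one s).2) fun x ↦ ?_
    exact (hcont x).comp_continuous (continuous_subtype_val.comp continuous_projIcc)
      fun s ↦ (projIcc 0 1 zero_le_one s).2
  · rw [projIcc_left, hα₀]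
  · have heq : EqOn (fun t ↦ α x (projIcc 0 1 zero_le_one t)) (α x) (Icc 0 1) := fun t ht ↦ by
      simp only [projIcc_of_mem zero_le_one ht]
    simpa only [heq hs] using (hα x s hs).congr_of_mem heq hs

namespace IsFlow

theorem norm_sub_le (hF : IsFlow V F) {C : ℝ} (hV : ∀ y, ‖V y‖ ≤ C) (x : E) {s : ℝ}
    (hs : s ∈ Icc (0 : ℝ) 1) : ‖F s x - x‖ ≤ C * s := by
  have h := (convex_Icc (0 : ℝ) 1).norm_image_sub_le_of_norm_hasDerivWithin_le
    (hF.hasDerivWithinAt x) (fun s _ ↦ hV (F s x)) (left_mem_Icc.2 zero_le_one) hs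
  rwa [hF.map_zero, sub_zero, Real.norm_of_nonneg hs.1] at h

theorem tendsto_nhds (hF : IsFlow V F) (x₀ : E) :
    Tendsto ↿F (𝓝[≥] 0 ×ˢ 𝓝 x₀) (𝓝 x₀) := by
  have h := hF.continuous.tendsto ((0 : ℝ), x₀)
  rw [nhds_prod_eq, show ↿F (0, x₀) = x₀ from hF.map_zero x₀] at h
  exact h.mono_left (prod_mono_left _ nhdsWithin_le_nhds)

end IsFlow

end Flow

section TaylorSeries

theorem isBigO_pow_succ_of_hasDerivWithinAt {α G : Type*} [NormedAddCommGroup G] [NormedSpace ℝ G]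
    {l : Filter α} {g g' : ℝ → α → G} {M : ℕ} (hg₀ : ∀ x, g 0 x = 0)
    (hg : ∀ x, ∀ s ∈ Icc (0 : ℝ) 1, HasDerivWithinAt (g · x) (g' s x) (Icc 0 1) s)
    (hg' : ↿g' =O[𝓝[≥] 0 ×ˢ l] fun q ↦ q.1 ^ M) :
    ↿g =O[𝓝[≥] 0 ×ˢ l] fun q ↦ q.1 ^ (M + 1) := by
  obtain ⟨c, hc₀, hc⟩ := hg'.exists_nonneg
  obtain ⟨p₁, hp₁, p₂, hp₂, hp⟩ := eventually_prod_iff.1 hc.bound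
  obtain ⟨δ, hδ, hδp⟩ := mem_nhdsGE_iff_exists_Icc_subset.1 hp₁
  refine IsBigO.of_bound c (eventually_prod_iff.2 ⟨(· ∈ Icc 0 (min δ 1)),
    Icc_mem_nhdsGE (lt_min hδ one_pos), p₂, hp₂, fun {s} hs {x} hx ↦ ?_⟩)
  have hs01 : Icc 0 s ⊆ Icc (0 : ℝ) 1 := Icc_subset_Icc_right (hs.2.trans (min_le_right _ _))
  have hbound : ∀ u ∈ Icc 0 s, ‖g' u x‖ ≤ c * s ^ M := fun u hu ↦ by
    have hle := hp (hδp ⟨hu.1, hu.2.trans (hs.2.trans (min_le_left _ _))⟩) hx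
    rw [Real.norm_of_nonneg (pow_nonneg hu.1 M)] at hle
    exact hle.trans (mul_le_mul_of_nonneg_left (pow_le_pow_left₀ hu.1 hu.2 M) hc₀)
  have hmean := (convex_Icc 0 s).norm_image_sub_le_of_norm_hasDerivWithin_le
    (fun u hu ↦ (hg x u (hs01 hu)).mono hs01) hbound (left_mem_Icc.2 hs.1) (right_mem_Icc.2 hs.1)
  rw [hg₀, sub_zero, sub_zero, Real.norm_of_nonneg hs.1] at hmean
  rw [Real.norm_of_nonneg (pow_nonneg hs.1 _), pow_succ, ← mul_assoc]
  exact hmean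

theorem hasDerivAt_sum_pow_smul_succ {G : Type*} [NormedAddCommGroup G] [NormedSpace ℝ G]
    (c : ℕ → G) (M : ℕ) (s : ℝ) :
    HasDerivAt (fun u : ℝ ↦ ∑ m ∈ Finset.range (M + 1), u ^ m • c m)
      (∑ m ∈ Finset.range M, s ^ m • ((m : ℝ) + 1) • c (m + 1)) s := by
  have hsum : HasDerivAt (fun u : ℝ ↦ ∑ m ∈ Finset.range M, u ^ (m + 1) • c (m + 1))
      (∑ m ∈ Finset.range M, s ^ m • ((m : ℝ) + 1) • c (m + 1)) s := by
    refine HasDerivAt.fun_sum fun m _ ↦ ?_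
    have h := (hasDerivAt_pow (m + 1) s).smul_const (c (m + 1))
    rw [mul_comm, mul_smul, Nat.add_sub_cancel] at h
    exact_mod_cast h
  simpa only [Finset.sum_range_succ', pow_zero, one_smul] using hsum.add_const (c 0)

variable {E : Type*} [NormedAddCommGroup E] [NormedSpace ℝ E]

/-- The time dependent map `P` acts on smooth observables through the power series of operators
`a`, asymptotically as the time tends to `0` from the right and locally uniformly near `x₀`:
`f (P s x) ∼ ∑ₘ sᵐ (aₘ f) x`. -/
structure HasTaylorSeriesAt (P : ℝ → E → E) (a : (Module.End ℝ (smoothMaps E))⟦X⟧) (x₀ : E) :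
    Prop where
  tendsto : Tendsto ↿P (𝓝[≥] 0 ×ˢ 𝓝 x₀) (𝓝 x₀)
  isBigO : ∀ (f : smoothMaps E) (M : ℕ),
    (fun q : ℝ × E ↦ f.1 (P q.1 q.2) -
      ∑ m ∈ Finset.range M, q.1 ^ m • (PowerSeries.coeff m a f).1 q.2)
        =O[𝓝[≥] 0 ×ˢ 𝓝 x₀] fun q ↦ q.1 ^ M

theorem isBigO_one_comp_of_tendsto {α : Type*} {l : Filter α} {h : α → E} {x₀ : E}
    (hh : Tendsto h l (𝓝 x₀)) (f : smoothMaps E) : (fun q ↦ f.1 (h q)) =O[l] fun _ ↦ (1 : ℝ) :=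
  (((contDiff_smoothMaps f).continuous.tendsto x₀).comp hh).isBigO_one ℝ

theorem hasTaylorSeriesAt_id (x₀ : E) : HasTaylorSeriesAt (fun _ x ↦ x) 1 x₀ where
  tendsto := tendsto_snd
  isBigO f M := by
    cases M with
    | zero => simpa using isBigO_one_comp_of_tendsto tendsto_snd f
    | succ M =>
      simp [Finset.sum_range_succ', PowerSeries.coeff_one, isBigO_zero]

theorem IsFlow.hasTaylorSeriesAt {V : smoothMaps E} {F : ℝ → E → E} (hF : IsFlow V.1 F) (x₀ : E) :
    HasTaylorSeriesAt F (formalExp (lieDeriv V)) x₀ where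
  tendsto := hF.tendsto_nhds x₀
  isBigO f M := by
    induction M generalizing f with
    | zero =>
      exact (isBigO_one_comp_of_tendsto (hF.tendsto_nhds x₀) f).congr
        (fun q ↦ (sub_zero (f.1 (F q.1 q.2))).symm) fun q ↦ (pow_zero q.1).symm
    | succ M ih =>
      refine isBigO_pow_succ_of_hasDerivWithinAt
        (g := fun s x ↦ f.1 (F s x) - ∑ m ∈ Finset.range (M + 1),
          s ^ m • (PowerSeries.coeff m (formalExp (lieDeriv V)) f).1 x)
        (g' := fun s x ↦ (lieDeriv V f).1 (F s x) - ∑ m ∈ Finset.range M,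
          s ^ m • (PowerSeries.coeff m (formalExp (lieDeriv V)) (lieDeriv V f)).1 x)
        (fun x ↦ ?_) (fun x s hs ↦ ?_) (ih (lieDeriv V f))
      · have h := (hasLeadingTerm_formalExp (lieDeriv V)).constantCoeff_eq_one one_ne_zero
        simp [Finset.sum_range_succ', hF.map_zero, h]
      · have hflow : HasDerivWithinAt (fun s ↦ f.1 (F s x)) ((lieDeriv V f).1 (F s x))
            (Icc 0 1) s :=
          (differentiable_smoothMaps f (F s x)).hasFDerivAt.comp_hasDerivWithinAt s
            (hF.hasDerivWithinAt x s hs)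
        have hcoeff (m : ℕ) :
            ((m : ℝ) + 1) • (PowerSeries.coeff (m + 1) (formalExp (lieDeriv V)) f).1 x =
              (PowerSeries.coeff m (formalExp (lieDeriv V)) (lieDeriv V f)).1 x :=
          congrArg (fun T : Module.End ℝ (smoothMaps E) ↦ (T f).1 x)
            (succ_smul_coeff_succ_formalExp (lieDeriv V) m)
        simp only [← hcoeff]
        exact hflow.sub (hasDerivAt_sum_pow_smul_succ _ M s).hasDerivWithinAt

theorem sum_range_pow_smul_coeff_mul (a b : (Module.End ℝ (smoothMaps E))⟦X⟧) (f : smoothMaps E)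
    (M : ℕ) (s : ℝ) (x : E) :
    ∑ k ∈ Finset.range M, s ^ k • (PowerSeries.coeff k (a * b) f).1 x =
      ∑ m ∈ Finset.range M, s ^ m • ∑ i ∈ Finset.range (M - m),
        s ^ i • (PowerSeries.coeff i a (PowerSeries.coeff m b f)).1 x := by
  simp only [Finset.smul_sum, smul_smul, ← pow_add]
  rw [← Finset.sum_range_diag_flip M fun m i ↦
    s ^ (m + i) • (PowerSeries.coeff i a (PowerSeries.coeff m b f)).1 x]
  refine Finset.sum_congr rfl fun k _ ↦ ?_
  rw [PowerSeries.coeff_mul, ← Finset.Nat.sum_antidiagonal_swap,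
    Finset.Nat.sum_antidiagonal_eq_sum_range_succ_mk]
  simp only [LinearMap.sum_apply, Prod.swap_prod_mk, Submodule.coe_sum, Finset.sum_apply,
    Module.End.mul_apply, Finset.smul_sum]
  refine Finset.sum_congr rfl fun m hm ↦ ?_
  rw [Nat.add_sub_of_le (Nat.lt_succ_iff.1 (Finset.mem_range.1 hm))]

namespace HasTaylorSeriesAt

variable {P Q : ℝ → E → E} {a b : (Module.End ℝ (smoothMaps E))⟦X⟧} {x₀ : E}

theorem comp (hQ : HasTaylorSeriesAt Q b x₀) (hP : HasTaylorSeriesAt P a x₀) :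
    HasTaylorSeriesAt (fun s x ↦ Q s (P s x)) (a * b) x₀ where
  tendsto := hQ.tendsto.comp (tendsto_fst.prodMk hP.tendsto)
  isBigO f M := by
    have houter : (fun q : ℝ × E ↦ f.1 (Q q.1 (P q.1 q.2)) -
        ∑ m ∈ Finset.range M, q.1 ^ m • (PowerSeries.coeff m b f).1 (P q.1 q.2))
          =O[𝓝[≥] 0 ×ˢ 𝓝 x₀] fun q ↦ q.1 ^ M :=
      (hQ.isBigO f M).comp_tendsto (tendsto_fst.prodMk hP.tendsto)
    have hinner : (fun q : ℝ × E ↦ ∑ m ∈ Finset.range M,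
        q.1 ^ m • ((PowerSeries.coeff m b f).1 (P q.1 q.2) - ∑ i ∈ Finset.range (M - m),
          q.1 ^ i • (PowerSeries.coeff i a (PowerSeries.coeff m b f)).1 q.2))
          =O[𝓝[≥] 0 ×ˢ 𝓝 x₀] fun q ↦ q.1 ^ M := by
      refine IsBigO.fun_sum fun m hm ↦ ?_
      have h := (isBigO_refl (fun q : ℝ × E ↦ q.1 ^ m) (𝓝[≥] 0 ×ˢ 𝓝 x₀)).smul
        (hP.isBigO (PowerSeries.coeff m b f) (M - m))
      simpa only [smul_eq_mul, ← pow_add, Nat.add_sub_of_le (Finset.mem_range.1 hm).le] using h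
    refine (houter.add hinner).congr_left fun q ↦ ?_
    simp only [sum_range_pow_smul_coeff_mul, smul_sub, Finset.sum_sub_distrib]
    abel

theorem isBigO_sub_sub_pow_smul (hP : HasTaylorSeriesAt P a x₀) {Y : smoothMaps E} {k : ℕ}
    (hk : k ≠ 0) (ha : HasLeadingTerm a k (lieDeriv Y)) :
    (fun q : ℝ × E ↦ P q.1 q.2 - q.2 - q.1 ^ k • Y.1 q.2)
      =O[𝓝[≥] 0 ×ˢ 𝓝 x₀] fun q ↦ q.1 ^ (k + 1) := by
  refine (hP.isBigO ⟨id, mem_smoothMaps.2 contDiff_id⟩ (k + 1)).congr_left fun q ↦ ?_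
  have hlow : ∑ m ∈ Finset.range k, q.1 ^ m • (PowerSeries.coeff m a
      ⟨id, mem_smoothMaps.2 contDiff_id⟩).1 q.2 = q.2 := by
    rw [Finset.sum_eq_single_of_mem 0 (Finset.mem_range.2 hk.bot_lt) fun m hm hm0 ↦ ?_]
    · simp only [ha.coeff_zero hk, pow_zero, one_smul, Module.End.one_apply, id_eq]
    · simp [ha.coeff_eq_zero hm0 (Finset.mem_range.1 hm)]
  rw [Finset.sum_range_succ, hlow, ha.coeff_self hk, lieDeriv_id, sub_sub]
  rfl

end HasTaylorSeriesAt

end TaylorSeries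

section Words

variable {ι E : Type*}

/-- The end point of the concatenation of the curves `s ↦ F a s ·`, starting at `x`, where `L` lists
the letters `a` and the durations in chronological order. -/
def flowAlong (F : ι → ℝ → E → E) (L : List (ι × ℝ)) (x : E) : E :=
  L.foldl (fun y b ↦ F b.1 b.2 y) x

theorem flowAlong_append (F : ι → ℝ → E → E) (L L' : List (ι × ℝ)) (x : E) :
    flowAlong F (L ++ L') x = flowAlong F L' (flowAlong F L x) :=
  List.foldl_append

variable [NormedAddCommGroup E] [NormedSpace ℝ E]

theorem hasTaylorSeriesAt_flowAlong {V : ι → smoothMaps E} {F : ι → ℝ → E → E}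
    (hF : ∀ a, IsFlow (V a).1 (F a)) (w : List ι) (x₀ : E) :
    HasTaylorSeriesAt (fun s x ↦ flowAlong F (w.map (·, s)) x)
      (w.map fun a ↦ formalExp (lieDeriv (V a))).prod x₀ := by
  induction w with
  | nil => exact hasTaylorSeriesAt_id x₀
  | cons a w ih => exact ih.comp ((hF a).hasTaylorSeriesAt x₀)

theorem hasTaylorSeriesAt_flowAlong_toWord [DecidableEq ι] {X : ι → smoothMaps E}
    {F : ι × Bool → ℝ → E → E} (hF : ∀ a, IsFlow (signed X a).1 (F a)) (g : FreeGroup ι) (x₀ : E) :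
    HasTaylorSeriesAt (fun s x ↦ flowAlong F (g.toWord.map (·, s)) x)
      (formalExpLift (fun i ↦ lieDeriv (X i)) g) x₀ := by
  simp only [formalExpLift_apply, ← map_signed]
  exact hasTaylorSeriesAt_flowAlong hF g.toWord x₀

/-- The iterated Lie brackets of a family of vector fields on a normed space. -/
inductive IsLieMonomial (X : ι → E → E) : (E → E) → Prop
  | of (i : ι) : IsLieMonomial X (X i)
  | lieBracket {Y Z : E → E} : IsLieMonomial X Y → IsLieMonomial X Z →
      IsLieMonomial X (VectorField.lieBracket ℝ Y Z)

theorem IsLieMonomial.exists_hasLeadingTerm {X : ι → smoothMaps E} {Y : E → E}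
    (hY : IsLieMonomial (fun i ↦ (X i).1) Y) :
    ∃ (hYs : Y ∈ smoothMaps E) (g : FreeGroup ι) (k : ℕ), k ≠ 0 ∧
      HasLeadingTerm (formalExpLift (fun i ↦ lieDeriv (X i)) g).val k (lieDeriv ⟨Y, hYs⟩) := by
  induction hY with
  | of i =>
    refine ⟨(X i).2, .of i, 1, one_ne_zero, ?_⟩
    rw [formalExpLift, FreeGroup.lift_apply_of]
    exact hasLeadingTerm_formalExp _
  | lieBracket _ _ ihY ihZ =>
    obtain ⟨hYs, g, k, hk, hg⟩ := ihY
    obtain ⟨hZs, h, l, hl, hh⟩ := ihZ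
    refine ⟨lieBracket_mem_smoothMaps hYs hZs, ⁅g, h⁆, k + l, by omega, ?_⟩
    rw [map_commutatorElement, lieDeriv_lieBracket ⟨_, hYs⟩ ⟨_, hZs⟩]
    exact hg.commutator hk hh hl

end Words

section LocalSteering

variable {α E : Type*} [NormedAddCommGroup E]

/-- The durations allowed in steering laws: continuous nonnegative functions of the desired
displacement `v` that are Hölder at `0`. -/
structure IsAdmissibleDuration (c : E → ℝ) : Prop where
  continuous : Continuous c
  nonneg : ∀ v, 0 ≤ c v
  exists_isBigO : ∃ r > (0 : ℝ), c =O[𝓝 0] fun v ↦ ‖v‖ ^ r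

theorem IsAdmissibleDuration.map_zero {c : E → ℝ} (hc : IsAdmissibleDuration c) : c 0 = 0 := by
  obtain ⟨r, hr, hO⟩ := hc.exists_isBigO
  exact hO.eq_zero_imp.self_of_nhds (by rw [norm_zero, Real.zero_rpow hr.ne'])

theorem IsAdmissibleDuration.rpow {c : E → ℝ} (hc : IsAdmissibleDuration c) {r : ℝ} (hr : 0 < r) :
    IsAdmissibleDuration fun v ↦ c v ^ r where
  continuous := hc.continuous.rpow_const fun _ ↦ Or.inr hr.le
  nonneg v := Real.rpow_nonneg (hc.nonneg v) r
  exists_isBigO := by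
    obtain ⟨q, hq, hO⟩ := hc.exists_isBigO
    refine ⟨q * r, by positivity, ?_⟩
    simpa only [Real.rpow_mul (norm_nonneg _)] using
      hO.rpow hr.le (Eventually.of_forall fun v ↦ Real.rpow_nonneg (norm_nonneg v) q)

theorem IsAdmissibleDuration.tendsto_prodMk {c : E → ℝ} (hc : IsAdmissibleDuration c) (x₀ : E) :
    Tendsto (fun q : E × E ↦ (c q.1, q.2)) (𝓝 0 ×ˢ 𝓝 x₀) (𝓝[≥] 0 ×ˢ 𝓝 x₀) := by
  have h : Tendsto c (𝓝 0) (𝓝[≥] 0) :=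
    tendsto_nhdsWithin_iff.2 ⟨by simpa only [hc.map_zero] using hc.continuous.tendsto 0,
      Eventually.of_forall hc.nonneg⟩
  exact (h.comp tendsto_fst).prodMk tendsto_snd

/-- The letters and durations that the steering law `L` prescribes for the desired displacement `v`;
a steering law is a list of letters whose durations are functions of the displacement. -/
def bangsAt (L : List (α × (E → ℝ))) (v : E) : List (α × ℝ) :=
  L.map fun b ↦ (b.1, b.2 v)

theorem continuous_flowAlong_bangsAt {F : α → ℝ → E → E} (hF : ∀ a, Continuous ↿(F a))
    {L : List (α × (E → ℝ))} (hL : ∀ b ∈ L, Continuous b.2) :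
    Continuous fun q : E × E ↦ flowAlong F (bangsAt L q.1) q.2 := by
  induction L with
  | nil => exact continuous_snd
  | cons b L ih =>
    obtain ⟨hb, hL⟩ := List.forall_mem_cons.1 hL
    have hstep : Continuous fun q : E × E ↦ F b.1 (b.2 q.1) q.2 :=
      (hF b.1).comp ((hb.comp continuous_fst).prodMk continuous_snd)
    exact (ih hL).comp (continuous_fst.prodMk hstep)

theorem flowAlong_bangsAt_zero {F : α → ℝ → E → E} (hF : ∀ a x, F a 0 x = x)
    {L : List (α × (E → ℝ))} (hL : ∀ b ∈ L, b.2 0 = 0) (x : E) :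
    flowAlong F (bangsAt L 0) x = x := by
  induction L with
  | nil => rfl
  | cons b L ih =>
    obtain ⟨hb, hL⟩ := List.forall_mem_cons.1 hL
    have hstep : F b.1 (b.2 0) x = x := by rw [hb, hF]
    exact (congrArg (flowAlong F (bangsAt L 0)) hstep).trans (ih hL)

/-- The flows `F` realise the displacements `A v` near `x₀`, up to an error `o(v)`, by a steering
law that depends on `v` only through admissible durations. -/
def Steerable (F : α → ℝ → E → E) (x₀ : E) (A : E → E) : Prop :=
  ∃ L : List (α × (E → ℝ)), (∀ b ∈ L, IsAdmissibleDuration b.2) ∧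
    (fun q : E × E ↦ flowAlong F (bangsAt L q.1) q.2 - q.2 - A q.1) =o[𝓝 0 ×ˢ 𝓝 x₀] Prod.fst

theorem steerable_zero (F : α → ℝ → E → E) (x₀ : E) : Steerable F x₀ 0 :=
  ⟨[], by simp, by simp [bangsAt, flowAlong]⟩

theorem Steerable.add {F : α → ℝ → E → E} (hF : ∀ a, Continuous ↿(F a))
    (hF₀ : ∀ a x, F a 0 x = x) {x₀ : E} {A B : E → E} (hA : Steerable F x₀ A)
    (hB : Steerable F x₀ B) : Steerable F x₀ (A + B) := by
  obtain ⟨L, hL, hA⟩ := hA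
  obtain ⟨L', hL', hB⟩ := hB
  refine ⟨L ++ L', fun b hb ↦ (List.mem_append.1 hb).elim (hL b) (hL' b), ?_⟩
  have htendsto : Tendsto (fun q : E × E ↦ flowAlong F (bangsAt L q.1) q.2) (𝓝 0 ×ˢ 𝓝 x₀)
      (𝓝 x₀) := by
    have h := (continuous_flowAlong_bangsAt hF fun b hb ↦ (hL b hb).continuous).tendsto (0, x₀)
    rwa [flowAlong_bangsAt_zero hF₀ fun b hb ↦ (hL b hb).map_zero, nhds_prod_eq] at h
  refine ((hB.comp_tendsto (tendsto_fst.prodMk htendsto)).add hA).congr_left fun q ↦ ?_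
  have hrun : flowAlong F (bangsAt (L ++ L') q.1) q.2 =
      flowAlong F (bangsAt L' q.1) (flowAlong F (bangsAt L q.1) q.2) := by
    rw [bangsAt, List.map_append, flowAlong_append]
    rfl
  simp only [Function.comp_apply, hrun, Pi.add_apply]
  abel

end LocalSteering

section FirstOrderSteering

variable {ι E : Type*} [NormedAddCommGroup E] [NormedSpace ℝ E] {x₀ : E}

theorem steerable_pos_smul {α : Type*} {F : α → ℝ → E → E} {w : List α}
    {a : (Module.End ℝ (smoothMaps E))⟦X⟧} {Y : smoothMaps E} {k : ℕ}
    (hw : HasTaylorSeriesAt (fun s x ↦ flowAlong F (w.map (·, s)) x) a x₀) (hk : k ≠ 0)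
    (ha : HasLeadingTerm a k (lieDeriv Y)) {c : E → ℝ} (hc : Continuous c) (hc₀ : ∀ v, 0 ≤ c v)
    (hcO : c =O[𝓝 0] fun v ↦ v) : Steerable F x₀ fun v ↦ c v • Y.1 x₀ := by
  have hcadm : IsAdmissibleDuration c := ⟨hc, hc₀, 1, one_pos, by simpa using hcO.norm_right⟩
  have hkpos : (0 : ℝ) < k := by exact_mod_cast hk.bot_lt
  have hroot := hcadm.rpow (inv_pos.2 hkpos)
  set s : E → ℝ := fun v ↦ c v ^ (k : ℝ)⁻¹
  have hpow (v : E) : s v ^ k = c v := Real.rpow_inv_natCast_pow (hc₀ v) hk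
  have hcO' : (fun q : E × E ↦ c q.1) =O[𝓝 0 ×ˢ 𝓝 x₀] Prod.fst := hcO.comp_tendsto tendsto_fst
  refine ⟨w.map fun b ↦ (b, s), fun b hb ↦ ?_, ?_⟩
  · obtain ⟨a, -, rfl⟩ := List.mem_map.1 hb
    exact hroot
  have herror : (fun q : E × E ↦ flowAlong F (w.map (·, s q.1)) q.2 - q.2 - s q.1 ^ k • Y.1 q.2)
      =o[𝓝 0 ×ˢ 𝓝 x₀] Prod.fst := by
    have hs : (fun q : E × E ↦ s q.1) =o[𝓝 0 ×ˢ 𝓝 x₀] fun _ ↦ (1 : ℝ) :=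
      (isLittleO_one_iff ℝ).2 <| ((hroot.map_zero ▸ hroot.continuous.tendsto 0 :
        Tendsto s (𝓝 0) (𝓝 0))).comp tendsto_fst
    have hsc : (fun q : E × E ↦ s q.1 ^ (k + 1)) =o[𝓝 0 ×ˢ 𝓝 x₀] Prod.fst := by
      simpa only [pow_succ, hpow, smul_eq_mul, mul_one, ← norm_smul, isLittleO_norm_right] using
        (hcO'.norm_right.mul_isLittleO hs)
    exact ((hw.isBigO_sub_sub_pow_smul hk ha).comp_tendsto
      (hroot.tendsto_prodMk x₀)).trans_isLittleO hsc
  have hfreeze : (fun q : E × E ↦ c q.1 • (Y.1 q.2 - Y.1 x₀)) =o[𝓝 0 ×ˢ 𝓝 x₀] Prod.fst := by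
    have hY : (fun q : E × E ↦ Y.1 q.2 - Y.1 x₀) =o[𝓝 0 ×ˢ 𝓝 x₀] fun _ ↦ (1 : ℝ) :=
      (isLittleO_one_iff ℝ).2 <| tendsto_sub_nhds_zero_iff.2 <|
        ((contDiff_smoothMaps Y).continuous.tendsto x₀).comp tendsto_snd
    simpa only [smul_eq_mul, mul_one, isLittleO_norm_right] using hcO'.norm_right.smul_isLittleO hY
  refine (herror.add hfreeze).congr_left fun q ↦ ?_
  simp only [bangsAt, List.map_map, Function.comp_def, hpow, smul_sub]
  abel

theorem steerable_smul {X : ι → smoothMaps E}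
    {F : ι × Bool → ℝ → E → E} (hF : ∀ a, IsFlow (signed X a).1 (F a)) {Y : E → E}
    (hY : IsLieMonomial (fun i ↦ (X i).1) Y) (φ : E →L[ℝ] ℝ) :
    Steerable F x₀ fun v ↦ φ v • Y x₀ := by
  classical
  obtain ⟨hYs, g, k, hk, hg⟩ := hY.exists_hasLeadingTerm
  have hg' : HasLeadingTerm (formalExpLift (fun i ↦ lieDeriv (X i)) g⁻¹).val k
      (lieDeriv (-⟨Y, hYs⟩)) := by
    rw [map_inv, map_neg]
    exact hg.inv hk
  have hmax (ψ : E →L[ℝ] ℝ) : (fun v ↦ max (ψ v) 0) =O[𝓝 0] fun v ↦ v :=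
    (isBigO_of_le _ fun v ↦ by
      rw [Real.norm_of_nonneg (le_max_right _ _)]
      exact max_le (le_abs_self (ψ v)) (abs_nonneg (ψ v))).trans (ψ.isBigO_id _)
  have hpos := steerable_pos_smul (hasTaylorSeriesAt_flowAlong_toWord hF g x₀) hk hg
    (φ.continuous.max continuous_const) (fun v ↦ le_max_right _ _) (hmax φ)
  have hneg := steerable_pos_smul (hasTaylorSeriesAt_flowAlong_toWord hF g⁻¹ x₀) hk hg'
    ((-φ).continuous.max continuous_const) (fun v ↦ le_max_right _ _) (hmax (-φ))
  convert hpos.add (fun a ↦ (hF a).continuous) (fun a ↦ (hF a).map_zero) hneg using 1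
  ext v
  simp only [Pi.add_apply, NegMemClass.coe_neg, Pi.neg_apply, smul_neg, ← sub_eq_add_neg,
    ← sub_smul, neg_apply, max_zero_sub_max_neg_zero_eq_self]

theorem steerable_id [FiniteDimensional ℝ E] {X : ι → smoothMaps E}
    {F : ι × Bool → ℝ → E → E} (hF : ∀ a, IsFlow (signed X a).1 (F a))
    (hspan : Submodule.span ℝ {v | ∃ Y, IsLieMonomial (fun i ↦ (X i).1) Y ∧ Y x₀ = v} = ⊤) :
    Steerable F x₀ id := by
  let b := Module.Basis.ofSpan hspan.ge
  let _ := FiniteDimensional.fintypeBasisIndex b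
  have hsum : (id : E → E) = ∑ i, fun v ↦ b.coord i v • b i := by
    ext v
    simp [b.sum_repr]
  rw [hsum]
  refine Finset.sum_induction _ _ (fun A B ↦ Steerable.add (fun a ↦ (hF a).continuous)
    fun a ↦ (hF a).map_zero) (steerable_zero F x₀) fun i _ ↦ ?_
  obtain ⟨Y, hY, hYx⟩ := Module.Basis.ofSpan_subset hspan.ge (mem_range_self i)
  rw [← hYx]
  exact steerable_smul hF hY (LinearMap.toContinuousLinearMap (b.coord i))

end FirstOrderSteering

section Steering

variable {α E : Type*}

/-- The successive end points of the flow segments `F (a k) (s k)`, starting at `x`. -/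
def bangState (F : α → ℝ → E → E) (a : ℕ → α) (s : ℕ → ℝ) (x : E) : ℕ → E
  | 0 => x
  | k + 1 => F (a k) (s k) (bangState F a s x k)

theorem bangState_add (F : α → ℝ → E → E) (a : ℕ → α) (s : ℕ → ℝ) (x : E) (k j : ℕ) :
    bangState F a s x (k + j) =
      flowAlong F ((List.range j).map fun i ↦ (a (k + i), s (k + i))) (bangState F a s x k) := by
  induction j with
  | zero => rfl
  | succ j ih =>
    rw [List.range_succ, List.map_append, flowAlong_append, ← ih]
    rfl

/-- The term of index `k` of the periodic sequence that repeats the list `L`. -/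
def cyclicGet {β : Type*} (L : List β) (hL : L ≠ []) (k : ℕ) : β :=
  L[k % L.length]'(Nat.mod_lt k (List.length_pos_iff.2 hL))

theorem cyclicGet_mem {β : Type*} (L : List β) (hL : L ≠ []) (k : ℕ) : cyclicGet L hL k ∈ L :=
  List.getElem_mem _

theorem map_cyclicGet_range {β γ : Type*} (L : List β) (hL : L ≠ []) (m : ℕ) (f : β → ℕ → γ) :
    ((List.range L.length).map fun i ↦ f (cyclicGet L hL (m * L.length + i))
      ((m * L.length + i) / L.length)) = L.map (f · m) := by
  refine List.ext_getElem (by simp) fun i hi _ ↦ ?_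
  have hi' : i < L.length := by simpa using hi
  have hdiv : (m * L.length + i) / L.length = m := by
    rw [mul_comm, Nat.mul_add_div (by omega), Nat.div_eq_of_lt hi', add_zero]
  have hmod : (m * L.length + i) % L.length = i := by
    rw [mul_comm, Nat.mul_add_mod, Nat.mod_eq_of_lt hi']
  simp only [List.getElem_map, List.getElem_range, cyclicGet, hdiv, hmod]

theorem pow_div_le_inv_mul_rpow_pow {ρ : ℝ} (hρ₀ : 0 < ρ) (hρ₁ : ρ ≤ 1) {N : ℕ} (hN : N ≠ 0)
    (k : ℕ) : ρ ^ (k / N) ≤ ρ⁻¹ * (ρ ^ (N : ℝ)⁻¹) ^ k := by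
  set θ := ρ ^ (N : ℝ)⁻¹
  have hθ₀ : 0 ≤ θ := Real.rpow_nonneg hρ₀.le _
  have hθ₁ : θ ≤ 1 := Real.rpow_le_one hρ₀.le hρ₁ (by positivity)
  have hθN : θ ^ N = ρ := Real.rpow_inv_natCast_pow hρ₀.le hN
  rw [inv_mul_eq_div, le_div_iff₀ hρ₀]
  calc ρ ^ (k / N) * ρ = θ ^ (N * (k / N)) * θ ^ N := by rw [pow_mul, hθN]
    _ ≤ θ ^ (N * (k / N)) * θ ^ (k % N) :=
      mul_le_mul_of_nonneg_left
        (pow_le_pow_of_le_one hθ₀ hθ₁ (Nat.mod_lt k hN.bot_lt).le) (pow_nonneg hθ₀ _)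
    _ = θ ^ k := by rw [← pow_add, Nat.div_add_mod]

variable [NormedAddCommGroup E]

/-- The iteration that applies the steering law `L` again and again, starting at `q.1`, each time
with the displacement that remains until the target `q.2`. -/
def steerIter (F : α → ℝ → E → E) (L : List (α × (E → ℝ))) (q : E × E) : ℕ → E
  | 0 => q.1
  | m + 1 => flowAlong F (bangsAt L (q.2 - steerIter F L q m)) (steerIter F L q m)

theorem continuous_steerIter {F : α → ℝ → E → E} (hF : ∀ a, Continuous ↿(F a))
    {L : List (α × (E → ℝ))} (hL : ∀ b ∈ L, Continuous b.2) (m : ℕ) :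
    Continuous fun q ↦ steerIter F L q m := by
  induction m with
  | zero => exact continuous_fst
  | succ m ih =>
    exact (continuous_flowAlong_bangsAt hF hL).comp ((continuous_snd.sub ih).prodMk ih)

theorem steerIter_diag {F : α → ℝ → E → E} (hF : ∀ a x, F a 0 x = x)
    {L : List (α × (E → ℝ))} (hL : ∀ b ∈ L, b.2 0 = 0) (x : E) (m : ℕ) :
    steerIter F L (x, x) m = x := by
  induction m with
  | zero => rfl
  | succ m ih =>
    simp only [steerIter, ih, sub_self, flowAlong_bangsAt_zero hF hL]

theorem norm_sub_steerIter_le {F : α → ℝ → E → E} {L : List (α × (E → ℝ))} {x₀ : E} {ρ : ℝ}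
    (hρ : ∀ v, ‖v‖ < ρ → ∀ x ∈ Metric.ball x₀ ρ,
      ‖flowAlong F (bangsAt L v) x - x - v‖ ≤ 2⁻¹ * ‖v‖)
    {q : E × E} (hq : q ∈ Metric.ball x₀ (ρ / 3) ×ˢ Metric.ball x₀ (ρ / 3)) (m : ℕ) :
    ‖q.2 - steerIter F L q m‖ ≤ 2⁻¹ ^ m * ‖q.2 - q.1‖ := by
  obtain ⟨hx, hy⟩ := hq
  rw [mem_ball_iff_norm] at hx hy
  have hxy : ‖q.2 - q.1‖ < 2 * (ρ / 3) := by
    linarith [norm_sub_le_norm_sub_add_norm_sub q.2 x₀ q.1, norm_sub_rev x₀ q.1]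
  induction m with
  | zero => simp [steerIter]
  | succ m ih =>
    set z := steerIter F L q m
    have hle : ‖q.2 - z‖ ≤ ‖q.2 - q.1‖ :=
      ih.trans (mul_le_of_le_one_left (norm_nonneg _) (pow_le_one₀ (by norm_num) (by norm_num)))
    have hz : z ∈ Metric.ball x₀ ρ := mem_ball_iff_norm.2 <| by
      linarith [norm_sub_le_norm_sub_add_norm_sub z q.2 x₀, norm_sub_rev z q.2]
    calc ‖q.2 - steerIter F L q (m + 1)‖
        = ‖flowAlong F (bangsAt L (q.2 - z)) z - z - (q.2 - z)‖ := by
          rw [norm_sub_rev, sub_sub, add_sub_cancel]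
          rfl
      _ ≤ 2⁻¹ * ‖q.2 - z‖ := hρ _ (by linarith [norm_nonneg (q.2 - q.1)]) z hz
      _ ≤ 2⁻¹ ^ (m + 1) * ‖q.2 - q.1‖ := by
          rw [pow_succ', mul_assoc]
          gcongr

theorem norm_sub_steerIter_lt {F : α → ℝ → E → E} {L : List (α × (E → ℝ))} {x₀ : E} {ρ : ℝ}
    (hρ : ∀ v, ‖v‖ < ρ → ∀ x ∈ Metric.ball x₀ ρ,
      ‖flowAlong F (bangsAt L v) x - x - v‖ ≤ 2⁻¹ * ‖v‖)
    {q : E × E} (hq : q ∈ Metric.ball x₀ (ρ / 3) ×ˢ Metric.ball x₀ (ρ / 3)) (m : ℕ) :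
    ‖q.2 - steerIter F L q m‖ < ρ := by
  have hle := norm_sub_steerIter_le hρ hq m
  have hpow : (2⁻¹ : ℝ) ^ m ≤ 1 := pow_le_one₀ (by norm_num) (by norm_num)
  have hx := mem_ball_iff_norm.1 hq.1
  have hy := mem_ball_iff_norm.1 hq.2
  linarith [norm_sub_le_norm_sub_add_norm_sub q.2 x₀ q.1, norm_sub_rev x₀ q.1,
    mul_le_of_le_one_left (norm_nonneg (q.2 - q.1)) hpow, norm_nonneg (q.1 - x₀)]

theorem bangState_mul_length (F : α → ℝ → E → E) (L : List (α × (E → ℝ))) (hL : L ≠ [])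
    (q : E × E) (m : ℕ) :
    bangState F (fun k ↦ (cyclicGet L hL k).1)
      (fun k ↦ (cyclicGet L hL k).2 (q.2 - steerIter F L q (k / L.length))) q.1
      (m * L.length) = steerIter F L q m := by
  induction m with
  | zero => rw [Nat.zero_mul]; rfl
  | succ m ih =>
    rw [Nat.succ_mul, bangState_add, ih,
      map_cyclicGet_range L hL m fun b k ↦ (b.1, b.2 (q.2 - steerIter F L q k))]
    rfl

theorem tendsto_steerIter {F : α → ℝ → E → E} {L : List (α × (E → ℝ))} {q : E × E}
    (hq : ∀ m, ‖q.2 - steerIter F L q m‖ ≤ 2⁻¹ ^ m) :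
    Tendsto (steerIter F L q) atTop (𝓝 q.2) :=
  tendsto_iff_norm_sub_tendsto_zero.2 <| squeeze_zero (fun _ ↦ norm_nonneg _)
    (fun m ↦ (norm_sub_rev _ _).trans_le (hq m))
    (tendsto_pow_atTop_nhds_zero_of_lt_one (by norm_num) (by norm_num))

theorem exists_eventually_forall_le_rpow {L : List (α × (E → ℝ))}
    (hL : ∀ b ∈ L, IsAdmissibleDuration b.2) :
    ∃ K r : ℝ, 0 ≤ K ∧ 0 < r ∧ ∀ᶠ v in 𝓝 0, ∀ b ∈ L, b.2 v ≤ K * ‖v‖ ^ r := by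
  induction L with
  | nil => exact ⟨0, 1, le_rfl, one_pos, by simp⟩
  | cons b L ih =>
    obtain ⟨hb, hL⟩ := List.forall_mem_cons.1 hL
    obtain ⟨K, r, hK, hr, hKr⟩ := ih hL
    obtain ⟨r', hr', hO⟩ := hb.exists_isBigO
    obtain ⟨K', hK'⟩ := hO.bound
    refine ⟨max K K', min r r', le_max_of_le_left hK, lt_min hr hr', ?_⟩
    filter_upwards [hKr, hK', Metric.ball_mem_nhds (0 : E) one_pos] with v hKv hKv' hv
    have hv1 : ‖v‖ ≤ 1 := (mem_ball_zero_iff.1 hv).le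
    have hmono {C t : ℝ} (hC : C ≤ max K K') (ht : 0 < t) (htm : min r r' ≤ t) :
        C * ‖v‖ ^ t ≤ max K K' * ‖v‖ ^ min r r' :=
      mul_le_mul hC (Real.rpow_le_rpow_of_exponent_ge_of_imp (norm_nonneg v) hv1 htm
        fun _ h ↦ absurd h ht.ne') (Real.rpow_nonneg (norm_nonneg v) t) (le_max_of_le_left hK)
    rw [Real.norm_of_nonneg (Real.rpow_nonneg (norm_nonneg v) r')] at hKv'
    exact List.forall_mem_cons.2
      ⟨(Real.le_norm_self _).trans (hKv'.trans (hmono (le_max_right _ _) hr' (min_le_right _ _))),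
        fun b hb ↦ (hKv b hb).trans (hmono (le_max_left _ _) hr (min_le_left _ _))⟩

/-- For `x, y ∈ W`, the flow segments with letters `a k` and durations `s k (x, y)` lead from `x` to
`y` in the limit; the durations are continuous, dominated by a geometric sequence and vanish for
`x = y`. -/
structure IsSteering (F : α → ℝ → E → E) (W : Set E) (a : ℕ → α) (s : ℕ → E × E → ℝ) : Prop where
  continuous : ∀ k, Continuous (s k)
  mem_Icc : ∀ k, ∀ q ∈ W ×ˢ W, s k q ∈ Icc 0 1
  exists_le_geometric : ∃ C θ : ℝ, 0 ≤ C ∧ 0 ≤ θ ∧ θ < 1 ∧ ∀ k, ∀ q ∈ W ×ˢ W, s k q ≤ C * θ ^ k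
  exists_tendsto : ∃ φ : ℕ → ℕ, Tendsto φ atTop atTop ∧ ∀ q ∈ W ×ˢ W,
    Tendsto (fun m ↦ bangState F a (s · q) q.1 (φ m)) atTop (𝓝 q.2)
  diag : ∀ k, ∀ x ∈ W, s k (x, x) = 0

theorem exists_radius_steering {F : α → ℝ → E → E} {L : List (α × (E → ℝ))} {x₀ : E}
    (hL : ∀ b ∈ L, IsAdmissibleDuration b.2)
    (hLo : (fun q : E × E ↦ flowAlong F (bangsAt L q.1) q.2 - q.2 - q.1) =o[𝓝 0 ×ˢ 𝓝 x₀]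
      Prod.fst) :
    ∃ ρ > 0, ∃ K r : ℝ, 0 ≤ K ∧ 0 < r ∧
      (∀ v, ‖v‖ < ρ → ∀ x ∈ Metric.ball x₀ ρ,
        ‖flowAlong F (bangsAt L v) x - x - v‖ ≤ 2⁻¹ * ‖v‖) ∧
      ∀ v, ‖v‖ < ρ → ‖v‖ ≤ 1 ∧ ∀ b ∈ L, b.2 v ≤ 1 ∧ b.2 v ≤ K * ‖v‖ ^ r := by
  obtain ⟨K, r, hK, hr, hKr⟩ := exists_eventually_forall_le_rpow hL
  have hone : ∀ᶠ v in 𝓝 0, ∀ b ∈ L, b.2 v < 1 :=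
    (eventually_all_finite L.finite_toSet).2 fun b hb ↦ (hL b hb).continuous.tendsto 0
      |>.eventually_lt_const (by rw [(hL b hb).map_zero]; exact one_pos)
  have hcontr := hLo.def (inv_pos.2 (zero_lt_two' ℝ))
  obtain ⟨p₁, hp₁, p₂, hp₂, hp⟩ := eventually_prod_iff.1 hcontr
  obtain ⟨ρ₁, hρ₁, hv⟩ := Metric.eventually_nhds_iff_ball.1
    (((hKr.and hone).and hp₁).and (Metric.ball_mem_nhds (0 : E) one_pos))
  obtain ⟨ρ₂, hρ₂, hx⟩ := Metric.eventually_nhds_iff_ball.1 hp₂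
  have hv' (v : E) (h : ‖v‖ < min ρ₁ ρ₂) :=
    hv v (mem_ball_zero_iff.2 (h.trans_le (min_le_left _ _)))
  refine ⟨min ρ₁ ρ₂, lt_min hρ₁ hρ₂, K, r, hK, hr, fun v h x hxball ↦ ?_, fun v h ↦ ?_⟩
  · exact hp (hv' v h).1.2 (hx x (Metric.ball_subset_ball (min_le_right _ _) hxball))
  · obtain ⟨⟨⟨hle, hlt⟩, -⟩, hball⟩ := hv' v h
    exact ⟨(mem_ball_zero_iff.1 hball).le, fun b hb ↦ ⟨(hlt b hb).le, hle b hb⟩⟩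

theorem steering_ne_nil [NormedSpace ℝ E] [Nontrivial E] {F : α → ℝ → E → E}
    {L : List (α × (E → ℝ))} {x₀ : E} {ρ : ℝ} (hρ : 0 < ρ)
    (h : ∀ v, ‖v‖ < ρ → ‖flowAlong F (bangsAt L v) x₀ - x₀ - v‖ ≤ 2⁻¹ * ‖v‖) : L ≠ [] := by
  rintro rfl
  obtain ⟨v, hv⟩ := exists_norm_eq E (half_pos hρ).le
  have hle : ‖x₀ - x₀ - v‖ ≤ 2⁻¹ * ‖v‖ := h v (by linarith)
  rw [sub_self, zero_sub, norm_neg] at hle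
  linarith

theorem rpow_norm_le_geometric {v : E} {m : ℕ} (hv : ‖v‖ ≤ 2⁻¹ ^ m) {r : ℝ} (hr : 0 ≤ r) :
    ‖v‖ ^ r ≤ ((2⁻¹ : ℝ) ^ r) ^ m := by
  rw [← Real.rpow_natCast, ← Real.rpow_mul (by norm_num), mul_comm, Real.rpow_mul (by norm_num),
    Real.rpow_natCast]
  exact Real.rpow_le_rpow (norm_nonneg v) hv hr

theorem Steerable.exists_isSteering [NormedSpace ℝ E] [Nontrivial E] {F : α → ℝ → E → E} {x₀ : E}
    (hF : ∀ a, Continuous ↿(F a)) (hF₀ : ∀ a x, F a 0 x = x) (h : Steerable F x₀ id) :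
    ∃ W, IsOpen W ∧ x₀ ∈ W ∧ ∃ a s, IsSteering F W a s := by
  obtain ⟨L, hL, hLo⟩ := h
  obtain ⟨ρ, hρ, K, r, hK, hr, hcontr, hdur⟩ := exists_radius_steering hL hLo
  have hne : L ≠ [] := steering_ne_nil hρ fun v hv ↦ hcontr v hv x₀ (Metric.mem_ball_self hρ)
  set W := Metric.ball x₀ (ρ / 3)
  have hsmall {q : E × E} (hq : q ∈ W ×ˢ W) (m : ℕ) : ‖q.2 - steerIter F L q m‖ < ρ :=
    norm_sub_steerIter_lt hcontr hq m
  have hgeom {q : E × E} (hq : q ∈ W ×ˢ W) (m : ℕ) : ‖q.2 - steerIter F L q m‖ ≤ 2⁻¹ ^ m :=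
    (norm_sub_steerIter_le hcontr hq m).trans
      (mul_le_of_le_one_right (by positivity) (hdur _ (hsmall hq 0)).1)
  have hmem (k : ℕ) := cyclicGet_mem L hne k
  set θ : ℝ := 2⁻¹ ^ r
  have hθ₀ : 0 < θ := by positivity
  have hθ₁ : θ < 1 := Real.rpow_lt_one (by norm_num) (by norm_num) hr
  have hlen : (0 : ℝ) < (L.length : ℝ)⁻¹ :=
    inv_pos.2 (by exact_mod_cast List.length_pos_iff.2 hne)
  refine ⟨W, Metric.isOpen_ball, Metric.mem_ball_self (by positivity),
    fun k ↦ (cyclicGet L hne k).1,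
    fun k q ↦ (cyclicGet L hne k).2 (q.2 - steerIter F L q (k / L.length)), ?_, ?_, ?_, ?_, ?_⟩
  · exact fun k ↦ (hL _ (hmem k)).continuous.comp (continuous_snd.sub
      (continuous_steerIter hF (fun b hb ↦ (hL b hb).continuous) _))
  · exact fun k q hq ↦ ⟨(hL _ (hmem k)).nonneg _, ((hdur _ (hsmall hq _)).2 _ (hmem k)).1⟩
  · refine ⟨K * θ⁻¹, θ ^ (L.length : ℝ)⁻¹, by positivity, by positivity,
      Real.rpow_lt_one hθ₀.le hθ₁ hlen, fun k q hq ↦ ?_⟩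
    refine ((hdur _ (hsmall hq _)).2 _ (hmem k)).2.trans ?_
    rw [mul_assoc]
    gcongr
    exact (rpow_norm_le_geometric (hgeom hq _) hr.le).trans (pow_div_le_inv_mul_rpow_pow hθ₀ hθ₁.le
      (List.length_pos_iff.2 hne).ne' k)
  · refine ⟨(· * L.length), tendsto_id.atTop_mul_const' (List.length_pos_iff.2 hne),
      fun q hq ↦ ?_⟩
    simp only [bangState_mul_length]
    exact tendsto_steerIter (hgeom hq)
  · intro k x _
    simp only [steerIter_diag hF₀ fun b hb ↦ (hL b hb).map_zero, sub_self]
    exact (hL _ (hmem k)).map_zero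

end Steering

section BangBang

variable {α E U : Type*} {s : ℕ → ℝ} {M : ℕ} {t : ℝ}

/-- The time at which the `M`-th of consecutive segments with durations `s k` begins. -/
def switchTime (s : ℕ → ℝ) (M : ℕ) : ℝ :=
  ∑ k ∈ Finset.range M, s k

theorem switchTime_succ (s : ℕ → ℝ) (M : ℕ) : switchTime s (M + 1) = switchTime s M + s M :=
  Finset.sum_range_succ s M

theorem monotone_switchTime (hs : ∀ k, 0 ≤ s k) : Monotone (switchTime s) :=
  monotone_nat_of_le_succ fun M ↦ by rw [switchTime_succ]; exact le_add_of_nonneg_right (hs M)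

section Control

variable [NormedAddCommGroup U]

/-- The piecewise constant control with consecutive values `c k` for the durations `s k`, `k < M`,
and with value `0` afterwards. -/
def bangControl (c : ℕ → U) (s : ℕ → ℝ) (M : ℕ) (t : ℝ) : U :=
  ∑ k ∈ Finset.range M, (Ico (switchTime s k) (switchTime s (k + 1))).indicator (fun _ ↦ c k) t

theorem bangControl_succ_apply (c : ℕ → U) (s : ℕ → ℝ) (M : ℕ) (t : ℝ) :
    bangControl c s (M + 1) t = bangControl c s M t +
      (Ico (switchTime s M) (switchTime s (M + 1))).indicator (fun _ ↦ c M) t :=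
  Finset.sum_range_succ _ M

theorem bangControl_eq_zero (c : ℕ → U) (hs : ∀ k, 0 ≤ s k) (ht : switchTime s M ≤ t) :
    bangControl c s M t = 0 :=
  Finset.sum_eq_zero fun _ hk ↦ indicator_of_notMem (fun h ↦ h.2.not_ge
    ((monotone_switchTime hs (Finset.mem_range.1 hk)).trans ht)) _

theorem bangControl_succ_of_lt (c : ℕ → U) (ht : t < switchTime s M) :
    bangControl c s (M + 1) t = bangControl c s M t := by
  rw [bangControl_succ_apply, indicator_of_notMem fun h ↦ h.1.not_gt ht, add_zero]

theorem bangControl_succ_of_mem (c : ℕ → U) (hs : ∀ k, 0 ≤ s k)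
    (ht : t ∈ Ico (switchTime s M) (switchTime s (M + 1))) : bangControl c s (M + 1) t = c M := by
  rw [bangControl_succ_apply, bangControl_eq_zero c hs ht.1, zero_add, indicator_of_mem ht]

theorem norm_bangControl_le {c : ℕ → U} {r : ℝ} (hr : 0 ≤ r) (hc : ∀ k, ‖c k‖ ≤ r)
    (hs : ∀ k, 0 ≤ s k) (M : ℕ) (t : ℝ) : ‖bangControl c s M t‖ ≤ r := by
  induction M with
  | zero => simpa [bangControl] using hr
  | succ M ih =>
    rcases lt_or_ge t (switchTime s M) with h | h
    · rwa [bangControl_succ_of_lt c h]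
    rcases lt_or_ge t (switchTime s (M + 1)) with h' | h'
    · rw [bangControl_succ_of_mem c hs ⟨h, h'⟩]
      exact hc M
    · rwa [bangControl_eq_zero c hs h', norm_zero]

theorem stronglyMeasurable_bangControl (c : ℕ → U) (s : ℕ → ℝ) (M : ℕ) :
    StronglyMeasurable (bangControl c s M) :=
  Finset.stronglyMeasurable_fun_sum _ fun _ _ ↦
    stronglyMeasurable_const.indicator measurableSet_Ico

end Control

/-- The curve that starts at `x`, runs through the flow segments `F (a k) (s k)`, `k < M`, and is
constant afterwards. -/
def bangPath (F : α → ℝ → E → E) (a : ℕ → α) (s : ℕ → ℝ) (x : E) : ℕ → ℝ → E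
  | 0, _ => x
  | M + 1, t => F (a M) (max 0 (min (t - switchTime s M) (s M))) (bangPath F a s x M t)

section

variable {F : α → ℝ → E → E} (a : ℕ → α) (x : E)

theorem bangPath_succ_of_le (hF₀ : ∀ a x, F a 0 x = x) (ht : t ≤ switchTime s M) :
    bangPath F a s x (M + 1) t = bangPath F a s x M t := by
  rw [bangPath, max_eq_left ((min_le_left _ _).trans (sub_nonpos.2 ht)), hF₀]

theorem bangPath_zero (hF₀ : ∀ a x, F a 0 x = x) (hs : ∀ k, 0 ≤ s k) (M : ℕ) :
    bangPath F a s x M 0 = x := by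
  induction M with
  | zero => rfl
  | succ M ih => rw [bangPath_succ_of_le a x hF₀ (Finset.sum_nonneg fun k _ ↦ hs k), ih]

theorem bangPath_of_ge (hs : ∀ k, 0 ≤ s k) (ht : switchTime s M ≤ t) :
    bangPath F a s x M t = bangState F a s x M := by
  induction M with
  | zero => rfl
  | succ M ih =>
    have hle : s M ≤ t - switchTime s M := by linarith [switchTime_succ s M]
    rw [bangPath, ih ((monotone_switchTime hs M.le_succ).trans ht), min_eq_right hle,
      max_eq_right (hs M)]
    rfl

theorem bangPath_succ_of_mem (hs : ∀ k, 0 ≤ s k)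
    (ht : t ∈ Icc (switchTime s M) (switchTime s (M + 1))) :
    bangPath F a s x (M + 1) t = F (a M) (t - switchTime s M) (bangState F a s x M) := by
  have hle : t - switchTime s M ≤ s M := by linarith [ht.2, switchTime_succ s M]
  rw [bangPath, bangPath_of_ge a x hs ht.1, min_eq_left hle, max_eq_right (sub_nonneg.2 ht.1)]

theorem continuous_bangPath [TopologicalSpace E] (hF : ∀ a, Continuous ↿(F a)) (s : ℕ → ℝ)
    (M : ℕ) : Continuous (bangPath F a s x M) := by
  induction M with
  | zero => exact continuous_const
  | succ M ih =>
    have hclamp : Continuous fun t ↦ max 0 (min (t - switchTime s M) (s M)) := by fun_prop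
    exact (hF (a M)).comp (hclamp.prodMk ih)

theorem stronglyMeasurable_bangControl_bangPath [NormedAddCommGroup U] [TopologicalSpace E]
    [TopologicalSpace.PseudoMetrizableSpace E] {Φ : U → E → E} {e : α → U} (hΦ : Continuous ↿Φ)
    (hF : ∀ a, Continuous ↿(F a)) (s : ℕ → ℝ) (M : ℕ) :
    StronglyMeasurable fun r ↦
      Φ (bangControl (fun k ↦ e (a k)) s M r) (bangPath F a s x M r) :=
  hΦ.comp_stronglyMeasurable ((stronglyMeasurable_bangControl _ s M).prodMk
    (continuous_bangPath a x hF s M).stronglyMeasurable)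

variable {a x} in
theorem eq_of_tendsto_bangPath_tsum [TopologicalSpace E] [T2Space E] (hs : ∀ k, 0 ≤ s k)
    (hsum : Summable s) {y z : E} (hz : Tendsto (bangPath F a s x · (∑' k, s k)) atTop (𝓝 z))
    {φ : ℕ → ℕ} (hφ : Tendsto φ atTop atTop)
    (hy : Tendsto (fun m ↦ bangState F a s x (φ m)) atTop (𝓝 y)) : z = y := by
  have heq (M : ℕ) : bangPath F a s x M (∑' k, s k) = bangState F a s x M :=
    bangPath_of_ge a x hs (hsum.sum_le_tsum _ fun k _ ↦ hs k)
  simp only [heq] at hz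
  exact tendsto_nhds_unique (hz.comp hφ) hy

end

variable [NormedAddCommGroup E] [NormedSpace ℝ E] {F : α → ℝ → E → E} {V : α → E → E}

theorem dist_bangPath_succ_le (hF : ∀ a, IsFlow (V a) (F a)) {B : ℝ} (hB : 0 ≤ B)
    (hV : ∀ a y, ‖V a y‖ ≤ B) (hs : ∀ k, s k ∈ Icc 0 1) (a : ℕ → α) (x : E) (M : ℕ) (t : ℝ) :
    dist (bangPath F a s x M t) (bangPath F a s x (M + 1) t) ≤ B * s M := by
  have hle : max 0 (min (t - switchTime s M) (s M)) ≤ s M := max_le (hs M).1 (min_le_right _ _)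
  rw [dist_comm, dist_eq_norm]
  exact ((hF (a M)).norm_sub_le (hV (a M)) _ ⟨le_max_left _ _, hle.trans (hs M).2⟩).trans
    (mul_le_mul_of_nonneg_left hle hB)

theorem hasDerivWithinAt_bangPath_succ_of_mem (hF : ∀ a, IsFlow (V a) (F a))
    (hs : ∀ k, s k ∈ Icc 0 1) (a : ℕ → α) (x : E)
    (ht : t ∈ Ico (switchTime s M) (switchTime s (M + 1))) :
    HasDerivWithinAt (bangPath F a s x (M + 1)) (V (a M) (bangPath F a s x (M + 1) t)) (Ioi t)
      t := by
  have hs₀ (k : ℕ) : 0 ≤ s k := (hs k).1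
  have hr : t - switchTime s M ∈ Ico (0 : ℝ) 1 :=
    ⟨sub_nonneg.2 ht.1, by linarith [ht.2, switchTime_succ s M, (hs M).2]⟩
  have hderiv := ((hF (a M)).hasDerivWithinAt (bangState F a s x M) _
    (Ico_subset_Icc_self hr)).mono_of_mem_nhdsWithin (Icc_mem_nhdsGE_of_mem hr)
  have hshift := hderiv.scomp t ((hasDerivWithinAt_id t (Ioi t)).sub_const (switchTime s M))
    fun r hr ↦ sub_le_sub_right (mem_Ioi.1 hr).le (switchTime s M)
  rw [one_smul, ← bangPath_succ_of_mem (F := F) a x hs₀ (Ico_subset_Icc_self ht)]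
    at hshift
  refine hshift.congr_of_eventuallyEq ?_
    (bangPath_succ_of_mem a x hs₀ (Ico_subset_Icc_self ht))
  filter_upwards [Ioo_mem_nhdsGT ht.2] with r hr
  exact bangPath_succ_of_mem a x hs₀ ⟨ht.1.trans hr.1.le, hr.2.le⟩

variable [NormedAddCommGroup U] {Φ : U → E → E} {e : α → U}

theorem hasDerivWithinAt_bangPath (hΦ₀ : ∀ y, Φ 0 y = 0) (hF : ∀ a, IsFlow (Φ (e a)) (F a))
    (hs : ∀ k, s k ∈ Icc 0 1) (a : ℕ → α) (x : E) (M : ℕ) (t : ℝ) :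
    HasDerivWithinAt (bangPath F a s x M)
      (Φ (bangControl (fun k ↦ e (a k)) s M t) (bangPath F a s x M t)) (Ioi t) t := by
  have hs₀ (k : ℕ) : 0 ≤ s k := (hs k).1
  induction M with
  | zero =>
    rw [bangControl, Finset.range_zero, Finset.sum_empty, hΦ₀]
    exact hasDerivWithinAt_const _ _ _
  | succ M ih =>
    rcases lt_or_ge t (switchTime s M) with h | h
    · have heq (r : ℝ) (hr : r ≤ switchTime s M) :=
        bangPath_succ_of_le a x (fun a ↦ (hF a).map_zero) hr
      rw [bangControl_succ_of_lt _ h, heq t h.le]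
      refine ih.congr_of_eventuallyEq ?_ (heq t h.le)
      filter_upwards [Ioo_mem_nhdsGT h] with r hr using heq r hr.2.le
    rcases lt_or_ge t (switchTime s (M + 1)) with h' | h'
    · rw [bangControl_succ_of_mem _ hs₀ ⟨h, h'⟩]
      exact hasDerivWithinAt_bangPath_succ_of_mem hF hs a x ⟨h, h'⟩
    · rw [bangControl_eq_zero _ hs₀ h', hΦ₀]
      refine (hasDerivWithinAt_const _ _ (bangState F a s x (M + 1))).congr
        (fun r hr ↦ bangPath_of_ge a x hs₀ (h'.trans (mem_Ioi.1 hr).le))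
        (bangPath_of_ge a x hs₀ h')

theorem bangPath_eq_add_integral [CompleteSpace E] (hΦ : Continuous ↿Φ) (hΦ₀ : ∀ y, Φ 0 y = 0)
    {B : ℝ} (hB : ∀ w, ‖w‖ ≤ 1 → ∀ y, ‖Φ w y‖ ≤ B) (he : ∀ a, ‖e a‖ ≤ 1)
    (hF : ∀ a, IsFlow (Φ (e a)) (F a)) (hs : ∀ k, s k ∈ Icc 0 1) (a : ℕ → α) (x : E) (M : ℕ)
    (ht : 0 ≤ t) :
    bangPath F a s x M t = x + ∫ r in (0 : ℝ)..t,
      Φ (bangControl (fun k ↦ e (a k)) s M r) (bangPath F a s x M r) := by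
  have hs₀ (k : ℕ) : 0 ≤ s k := (hs k).1
  have hcont := continuous_bangPath a x (fun a ↦ (hF a).continuous) s M
  have h_integrable : IntervalIntegrable
      (fun r ↦ Φ (bangControl (fun k ↦ e (a k)) s M r) (bangPath F a s x M r)) volume 0 t := by
    exact (intervalIntegrable_const (c := B)).mono_fun'
      (stronglyMeasurable_bangControl_bangPath a x hΦ (fun a ↦ (hF a).continuous) s
        M).aestronglyMeasurable (Eventually.of_forall fun r ↦
          hB _ (norm_bangControl_le zero_le_one (fun k ↦ he (a k)) hs₀ M r) _)
  rw [intervalIntegral.integral_eq_sub_of_hasDeriv_right_of_le ht hcont.continuousOn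
    (fun r _ ↦ hasDerivWithinAt_bangPath hΦ₀ hF hs a x M r) h_integrable,
    bangPath_zero a x (fun a ↦ (hF a).map_zero) hs₀, add_sub_cancel]

theorem exists_tendstoUniformly_bangPath [CompleteSpace E] (hF : ∀ a, IsFlow (V a) (F a)) {B : ℝ}
    (hB : 0 ≤ B) (hV : ∀ a y, ‖V a y‖ ≤ B) (hs : ∀ k, s k ∈ Icc 0 1) (hsum : Summable s)
    (a : ℕ → α) (x : E) : ∃ γ, TendstoUniformly (bangPath F a s x) γ atTop := by
  have hdist := dist_bangPath_succ_le hF hB hV hs a x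
  have hBs : Summable fun k ↦ B * s k := hsum.mul_left B
  choose γ hγ using fun t ↦ cauchySeq_tendsto_of_complete
    (cauchySeq_of_dist_le_of_summable _ (fun M ↦ hdist M t) hBs)
  refine ⟨γ, Metric.tendstoUniformly_iff.2 fun ε hε ↦ ?_⟩
  filter_upwards [(tendsto_sum_nat_add fun k ↦ B * s k).eventually_lt_const hε] with M hM t
  rw [dist_comm]
  refine (dist_le_tsum_of_dist_le_of_tendsto _ (fun M ↦ hdist M t) hBs (hγ t) M).trans_lt ?_
  simpa only [add_comm M] using hM

theorem eq_add_integral_of_tendsto [CompleteSpace E] (hΦ : Continuous ↿Φ)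
    (hΦ₀ : ∀ y, Φ 0 y = 0) {B : ℝ} (hB : ∀ w, ‖w‖ ≤ 1 → ∀ y, ‖Φ w y‖ ≤ B)
    (he : ∀ a, ‖e a‖ ≤ 1) (hF : ∀ a, IsFlow (Φ (e a)) (F a)) (hs : ∀ k, s k ∈ Icc 0 1)
    {a : ℕ → α} {x : E} {γ : ℝ → E} (hγ : ∀ t, Tendsto (bangPath F a s x · t) atTop (𝓝 (γ t)))
    {u : ℝ → U} {ns : ℕ → ℕ} (hns : Tendsto ns atTop atTop)
    (hu : ∀ᵐ r ∂volume.restrict (Ici 0),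
      Tendsto (fun i ↦ bangControl (fun k ↦ e (a k)) s (ns i) r) atTop (𝓝 (u r)))
    (ht : 0 ≤ t) : γ t = x + ∫ r in (0 : ℝ)..t, Φ (u r) (γ r) := by
  have hlim : Tendsto (fun i ↦ ∫ r in (0 : ℝ)..t,
      Φ (bangControl (fun k ↦ e (a k)) s (ns i) r) (bangPath F a s x (ns i) r)) atTop
      (𝓝 (∫ r in (0 : ℝ)..t, Φ (u r) (γ r))) := by
    refine intervalIntegral.tendsto_integral_filter_of_dominated_convergence (fun _ ↦ B)
      (Eventually.of_forall fun i ↦ (stronglyMeasurable_bangControl_bangPath a x hΦ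
        (fun a ↦ (hF a).continuous) s (ns i)).aestronglyMeasurable)
      (Eventually.of_forall fun i ↦ Eventually.of_forall fun r _ ↦ hB _
        (norm_bangControl_le zero_le_one (fun k ↦ he (a k)) (fun k ↦ (hs k).1) _ r) _)
      intervalIntegrable_const ?_
    filter_upwards [(ae_restrict_iff' measurableSet_Ici).1 hu] with r hr hrt
    rw [uIoc_of_le ht] at hrt
    exact (hΦ.tendsto (u r, γ r)).comp ((hr hrt.1.le).prodMk_nhds ((hγ r).comp hns))
  refine tendsto_nhds_unique ((hγ t).comp hns) ((hlim.const_add x).congr fun i ↦ ?_)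
  exact (bangPath_eq_add_integral hΦ hΦ₀ hB he hF hs a x _ ht).symm

end BangBang

section LpControl

variable {U : Type*} [NormedAddCommGroup U] (p : ℝ≥0∞)

/-- The control with value `c` on `[a, b)` and `0` elsewhere, as an element of `L^p([0,∞))`. -/
def bang (c : U) (a b : ℝ) : Lp U p (volume.restrict (Ici (0 : ℝ))) :=
  indicatorConstLp p (measurableSet_Ico (a := a) (b := b))
    ((Measure.restrict_apply_le _ _).trans_lt measure_Ico_lt_top).ne c

theorem bang_self (c : U) (a : ℝ) : bang p c a a = 0 := by
  simp only [bang, Ico_self, indicatorConstLp_empty]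

theorem coeFn_bang (c : U) (a b : ℝ) :
    bang p c a b =ᵐ[volume.restrict (Ici 0)] (Ico a b).indicator fun _ ↦ c :=
  indicatorConstLp_coeFn

theorem symmDiff_Ico_subset (a b a' b' : ℝ) :
    symmDiff (Ico a' b') (Ico a b) ⊆ uIcc a' a ∪ uIcc b' b := by
  intro r hr
  simp only [mem_union, mem_uIcc]
  simp only [Set.mem_symmDiff, mem_Ico, not_and_or, not_le, not_lt] at hr
  grind

theorem continuous_bang [Fact (1 ≤ p)] (hp : p ≠ ⊤) (c : U) :
    Continuous fun q : ℝ × ℝ ↦ bang p c q.1 q.2 := by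
  refine continuous_indicatorConstLp_set hp fun q ↦ ?_
  have hle (q' : ℝ × ℝ) :
      volume.restrict (Ici 0) (symmDiff (Ico q'.1 q'.2) (Ico q.1 q.2)) ≤
        ENNReal.ofReal |q.1 - q'.1| + ENNReal.ofReal |q.2 - q'.2| :=
    calc volume.restrict (Ici 0) (symmDiff (Ico q'.1 q'.2) (Ico q.1 q.2))
        ≤ volume (uIcc q'.1 q.1 ∪ uIcc q'.2 q.2) :=
          (Measure.restrict_apply_le _ _).trans (measure_mono (symmDiff_Ico_subset _ _ _ _))
      _ ≤ volume (uIcc q'.1 q.1) + volume (uIcc q'.2 q.2) := measure_union_le _ _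
      _ = ENNReal.ofReal |q.1 - q'.1| + ENNReal.ofReal |q.2 - q'.2| := by
          rw [Real.volume_interval, Real.volume_interval]
  refine tendsto_of_tendsto_of_tendsto_of_le_of_le tendsto_const_nhds ?_ (fun _ ↦ zero_le) hle
  have hcont : Continuous fun q' : ℝ × ℝ ↦
      ENNReal.ofReal |q.1 - q'.1| + ENNReal.ofReal |q.2 - q'.2| :=
    (ENNReal.continuous_ofReal.comp (by fun_prop)).add
      (ENNReal.continuous_ofReal.comp (by fun_prop))
  simpa using hcont.tendsto q

theorem norm_bang_le {c : U} (hc : ‖c‖ ≤ 1) {a b : ℝ} (hab : a ≤ b) :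
    ‖bang p c a b‖ ≤ (b - a) ^ (1 / p.toReal) := by
  have hmeas : (volume.restrict (Ici (0 : ℝ))).real (Ico a b) ≤ b - a :=
    ENNReal.toReal_le_of_le_ofReal (sub_nonneg.2 hab)
      ((Measure.restrict_apply_le _ _).trans_eq Real.volume_Ico)
  calc ‖bang p c a b‖ ≤ ‖c‖ * (volume.restrict (Ici (0 : ℝ))).real (Ico a b) ^ (1 / p.toReal) :=
        norm_indicatorConstLp_le
    _ ≤ 1 * (b - a) ^ (1 / p.toReal) := by gcongr
    _ = (b - a) ^ (1 / p.toReal) := one_mul _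

theorem coeFn_sum_bang (c : ℕ → U) (s : ℕ → ℝ) (M : ℕ) :
    ⇑(∑ k ∈ Finset.range M, bang p (c k) (switchTime s k) (switchTime s (k + 1)))
      =ᵐ[volume.restrict (Ici 0)] bangControl c s M := by
  induction M with
  | zero => exact Lp.coeFn_zero _ _ _
  | succ M ih =>
    rw [Finset.sum_range_succ]
    filter_upwards [Lp.coeFn_add
      (∑ k ∈ Finset.range M, bang p (c k) (switchTime s k) (switchTime s (k + 1)))
      (bang p (c M) (switchTime s M) (switchTime s (M + 1))), ih,
      coeFn_bang p (c M) (switchTime s M) (switchTime s (M + 1))] with t hadd hsum hbang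
    rw [hadd, Pi.add_apply, hsum, hbang, bangControl_succ_apply]

theorem summable_rpow_mul_geometric {C θ : ℝ} (hC : 0 ≤ C) (hθ₀ : 0 ≤ θ) (hθ₁ : θ < 1)
    {r : ℝ} (hr : 0 < r) : Summable fun k : ℕ ↦ (C * θ ^ k) ^ r := by
  have heq (k : ℕ) : (C * θ ^ k) ^ r = C ^ r * (θ ^ r) ^ k := by
    rw [Real.mul_rpow hC (pow_nonneg hθ₀ k), Real.rpow_pow_comm hθ₀]
  simp only [heq]
  exact (summable_geometric_of_lt_one (Real.rpow_nonneg hθ₀ r)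
    (Real.rpow_lt_one hθ₀ hθ₁ hr)).mul_left _

theorem norm_bang_switchTime_le {c : ℕ → U} (hc : ∀ k, ‖c k‖ ≤ 1) {s : ℕ → ℝ} {k : ℕ}
    (hs₀ : 0 ≤ s k) {b : ℝ} (hs : s k ≤ b) :
    ‖bang p (c k) (switchTime s k) (switchTime s (k + 1))‖ ≤ b ^ (1 / p.toReal) := by
  have h := norm_bang_le p (hc k)
    ((le_add_of_nonneg_right hs₀).trans_eq (switchTime_succ s k).symm)
  rw [sub_eq_iff_eq_add'.2 (switchTime_succ s k)] at h
  exact h.trans (Real.rpow_le_rpow hs₀ hs (by positivity))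

/-- The control in `L^p([0,∞))` that takes the values `c k` successively, each for the duration
`s k`, and vanishes afterwards. -/
def bangBangControl [Fact (1 ≤ p)] (c : ℕ → U) (s : ℕ → ℝ) :
    Lp U p (volume.restrict (Ici (0 : ℝ))) :=
  ∑' k, bang p (c k) (switchTime s k) (switchTime s (k + 1))

variable [Fact (1 ≤ p)]

theorem bangBangControl_zero (c : ℕ → U) : bangBangControl p c 0 = 0 := by
  simp [bangBangControl, switchTime, bang_self]

variable {c : ℕ → U} {C θ : ℝ}

theorem summable_bang [CompleteSpace U] (hp : p ≠ ⊤) (hc : ∀ k, ‖c k‖ ≤ 1) (hC : 0 ≤ C)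
    (hθ₀ : 0 ≤ θ) (hθ₁ : θ < 1) {s : ℕ → ℝ}
    (hs₀ : ∀ k, 0 ≤ s k) (hs : ∀ k, s k ≤ C * θ ^ k) :
    Summable fun k ↦ bang p (c k) (switchTime s k) (switchTime s (k + 1)) := by
  have hp₀ : 0 < 1 / p.toReal :=
    one_div_pos.2 (ENNReal.toReal_pos (zero_lt_one.trans_le Fact.out).ne' hp)
  exact .of_norm_bounded (summable_rpow_mul_geometric hC hθ₀ hθ₁ hp₀) fun k ↦
    norm_bang_switchTime_le p hc (hs₀ k) (hs k)

theorem continuousOn_bangBangControl [CompleteSpace U] {T : Type*} [TopologicalSpace T]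
    (hp : p ≠ ⊤) (hc : ∀ k, ‖c k‖ ≤ 1) (hC : 0 ≤ C) (hθ₀ : 0 ≤ θ) (hθ₁ : θ < 1)
    {s : ℕ → T → ℝ} {A : Set T} (hcont : ∀ k, Continuous (s k))
    (hs₀ : ∀ k, ∀ q ∈ A, 0 ≤ s k q) (hs : ∀ k, ∀ q ∈ A, s k q ≤ C * θ ^ k) :
    ContinuousOn (fun q ↦ bangBangControl p c (s · q)) A := by
  have hp₀ : 0 < 1 / p.toReal :=
    one_div_pos.2 (ENNReal.toReal_pos (zero_lt_one.trans_le Fact.out).ne' hp)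
  have hswitch (k : ℕ) : Continuous fun q ↦ switchTime (s · q) k :=
    continuous_finsetSum _ fun k _ ↦ hcont k
  exact continuousOn_tsum
    (fun k ↦ ((continuous_bang p hp (c k)).comp
      ((hswitch k).prodMk (hswitch (k + 1)))).continuousOn)
    (summable_rpow_mul_geometric hC hθ₀ hθ₁ hp₀)
    fun k q hq ↦ norm_bang_switchTime_le p hc (hs₀ k q hq) (hs k q hq)

end LpControl

section Trajectory

variable {α E U : Type*} [NormedAddCommGroup E] [NormedSpace ℝ E] [NormedAddCommGroup U]

/-- The solutions on `[0,∞)` of the integral equation of the control system `γ' = Φ(u, γ)` with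
initial value `x`. -/
def IsTrajectory (Φ : U → E → E) (x : E) (u : ℝ → U) (γ : ℝ → E) : Prop :=
  ContinuousOn γ (Ici 0) ∧ ∀ t ∈ Ici (0 : ℝ), γ t = x + ∫ s in (0 : ℝ)..t, Φ (u s) (γ s)

variable [CompleteSpace E] {Φ : U → E → E} {e : α → U} {F : α → ℝ → E → E} {B : ℝ}

theorem exists_isTrajectory_bangBangControl {p : ℝ≥0∞} [Fact (1 ≤ p)] (hΦ : Continuous ↿Φ)
    (hΦ₀ : ∀ y, Φ 0 y = 0) (hB : ∀ w, ‖w‖ ≤ 1 → ∀ y, ‖Φ w y‖ ≤ B) (he : ∀ a, ‖e a‖ ≤ 1)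
    (hF : ∀ a, IsFlow (Φ (e a)) (F a)) {s : ℕ → ℝ} (hs : ∀ k, s k ∈ Icc 0 1) (hsum : Summable s)
    {a : ℕ → α} (hbang : Summable fun k ↦
      bang p (e (a k)) (switchTime s k) (switchTime s (k + 1))) {x y : E} {φ : ℕ → ℕ}
    (hφ : Tendsto φ atTop atTop) (hy : Tendsto (fun m ↦ bangState F a s x (φ m)) atTop (𝓝 y)) :
    ∃ γ, IsTrajectory Φ x (bangBangControl p (fun k ↦ e (a k)) s) γ ∧ γ (∑' k, s k) = y := by
  have hB₀ : 0 ≤ B := (norm_nonneg _).trans (hB 0 (by simp) x)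
  obtain ⟨γ, hγ⟩ := exists_tendstoUniformly_bangPath hF hB₀ (fun a ↦ hB _ (he a)) hs hsum a x
  have hγcont : Continuous γ := hγ.continuous <| Frequently.of_forall fun M ↦
    continuous_bangPath a x (fun a ↦ (hF a).continuous) s M
  obtain ⟨ns, hns, hae⟩ :=
    (tendstoInMeasure_of_tendsto_Lp hbang.hasSum.tendsto_sum_nat).exists_seq_tendsto_ae
  have hu : ∀ᵐ r ∂volume.restrict (Ici 0),
      Tendsto (fun i ↦ bangControl (fun k ↦ e (a k)) s (ns i) r) atTop
        (𝓝 (bangBangControl p (fun k ↦ e (a k)) s r)) := by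
    filter_upwards [hae, ae_all_iff.2 fun M ↦ coeFn_sum_bang p (fun k ↦ e (a k)) s M]
      with r hlim heq
    simpa only [heq, bangBangControl] using hlim
  exact ⟨γ, ⟨hγcont.continuousOn, fun t ht ↦ eq_add_integral_of_tendsto hΦ hΦ₀ hB he hF hs
    (fun t ↦ hγ.tendsto_at t) hns.tendsto_atTop hu ht⟩,
    eq_of_tendsto_bangPath_tsum (fun k ↦ (hs k).1) hsum (hγ.tendsto_at _) hφ hy⟩

/-- Controls `σ (x, y)` and times `τ (x, y) ≥ 0` that steer the control system `Φ` from `x` to `y`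
and depend continuously on `x, y ∈ W`, the control and the time being zero for `x = y`. -/
structure IsCrossSection (Φ : U → E → E) {p : ℝ≥0∞} [Fact (1 ≤ p)] (W : Set E)
    (σ : E × E → Lp U p (volume.restrict (Ici (0 : ℝ)))) (τ : E × E → ℝ) : Prop where
  continuousOn_control : ContinuousOn σ (W ×ˢ W)
  continuousOn_time : ContinuousOn τ (W ×ˢ W)
  exists_isTrajectory : ∀ x ∈ W, ∀ y ∈ W, 0 ≤ τ (x, y) ∧
    ∃ γ, IsTrajectory Φ x (σ (x, y)) γ ∧ γ (τ (x, y)) = y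
  diag : ∀ x ∈ W, σ (x, x) = 0 ∧ τ (x, x) = 0

theorem IsSteering.isCrossSection [CompleteSpace U] {p : ℝ≥0∞} [Fact (1 ≤ p)] (hp : p ≠ ⊤)
    (hΦ : Continuous ↿Φ) (hΦ₀ : ∀ y, Φ 0 y = 0) (hB : ∀ w, ‖w‖ ≤ 1 → ∀ y, ‖Φ w y‖ ≤ B)
    (he : ∀ a, ‖e a‖ ≤ 1) (hF : ∀ a, IsFlow (Φ (e a)) (F a)) {W : Set E} {a : ℕ → α}
    {s : ℕ → E × E → ℝ} (h : IsSteering F W a s) :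
    IsCrossSection Φ W (fun q ↦ bangBangControl p (fun k ↦ e (a k)) (s · q))
      fun q ↦ ∑' k, s k q := by
  obtain ⟨C, θ, hC, hθ₀, hθ₁, hle⟩ := h.exists_le_geometric
  obtain ⟨φ, hφ, hlim⟩ := h.exists_tendsto
  have hs₀ (k : ℕ) (q : E × E) (hq : q ∈ W ×ˢ W) : 0 ≤ s k q := (h.mem_Icc k q hq).1
  have hgeom : Summable fun k : ℕ ↦ C * θ ^ k := (summable_geometric_of_lt_one hθ₀ hθ₁).mul_left C
  refine ⟨continuousOn_bangBangControl p hp (fun k ↦ he (a k)) hC hθ₀ hθ₁ h.continuous hs₀ hle,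
    continuousOn_tsum (fun k ↦ (h.continuous k).continuousOn) hgeom fun k q hq ↦ ?_,
    fun x hx y hy ↦ ⟨tsum_nonneg fun k ↦ hs₀ k _ ⟨hx, hy⟩, ?_⟩, fun x hx ↦ ?_⟩
  · exact (Real.norm_of_nonneg (hs₀ k q hq)).trans_le (hle k q hq)
  · have hq : (x, y) ∈ W ×ˢ W := ⟨hx, hy⟩
    exact exists_isTrajectory_bangBangControl hΦ hΦ₀ hB he hF (fun k ↦ h.mem_Icc k _ hq)
      (hgeom.of_nonneg_of_le (fun k ↦ hs₀ k _ hq) fun k ↦ hle k _ hq)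
      (summable_bang p hp (fun k ↦ he (a k)) hC hθ₀ hθ₁ (fun k ↦ hs₀ k _ hq) fun k ↦ hle k _ hq)
      hφ (hlim _ hq)
  · have hzero : (s · (x, x)) = 0 := funext fun k ↦ h.diag k x hx
    exact ⟨by simp only [hzero, bangBangControl_zero],
      (tsum_congr fun k ↦ h.diag k x hx).trans tsum_zero⟩

end Trajectory

section ControlAffine

variable {ι E : Type*} [NormedAddCommGroup E] [NormedSpace ℝ E] {X : ι → E → E}

theorem exists_isFlow_signed [CompleteSpace E] (hX : ∀ i, Differentiable ℝ (X i)) {C L : ℝ}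
    (hC : ∀ i y, ‖X i y‖ ≤ C) (hL : ∀ i y, ‖fderiv ℝ (X i) y‖ ≤ L) (a : ι × Bool) :
    ∃ F, IsFlow (signed X a) F := by
  have hlip (i : ι) : LipschitzWith L.toNNReal (X i) :=
    lipschitzWith_of_nnnorm_fderiv_le (hX i) fun y ↦ NNReal.le_toNNReal_of_coe_le (hL i y)
  obtain ⟨i, _ | _⟩ := a
  · exact exists_isFlow (hlip i).neg (C := C) fun y ↦ by simpa [signed] using hC i y
  · exact exists_isFlow (hlip i) (hC i)

variable [Fintype ι]

/-- The velocity `∑ i, wᵢ Xᵢ` of the control system of the vector fields `Xᵢ`, for the control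
value `w`. -/
def controlField (X : ι → E → E) (w : EuclideanSpace ℝ ι) (y : E) : E :=
  ∑ i, w i • X i y

theorem continuous_controlField (hX : ∀ i, Continuous (X i)) : Continuous ↿(controlField X) :=
  continuous_finsetSum _ fun i _ ↦
    ((EuclideanSpace.proj i).continuous.comp continuous_fst).smul ((hX i).comp continuous_snd)

theorem controlField_zero (X : ι → E → E) (y : E) : controlField X 0 y = 0 := by
  simp [controlField]

theorem norm_controlField_le {C : ℝ} (hC : ∀ i y, ‖X i y‖ ≤ C) {w : EuclideanSpace ℝ ι}
    (hw : ‖w‖ ≤ 1) (y : E) : ‖controlField X w y‖ ≤ Fintype.card ι * C := by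
  calc ‖controlField X w y‖ ≤ ∑ i, ‖w i • X i y‖ := norm_sum_le _ _
    _ ≤ ∑ _i : ι, C := Finset.sum_le_sum fun i _ ↦ by
      have hwi : ‖w i‖ ≤ 1 := (PiLp.norm_apply_le w i).trans hw
      rw [norm_smul]
      exact (mul_le_of_le_one_left (norm_nonneg _) hwi).trans (hC i y)
    _ = Fintype.card ι * C := by rw [Finset.sum_const, nsmul_eq_mul, Finset.card_univ]

/-- The controls `± eᵢ` driving the system along the vector fields `± Xᵢ`. -/
def basisControl [DecidableEq ι] : ι × Bool → EuclideanSpace ℝ ι :=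
  signed fun i ↦ EuclideanSpace.single i 1

theorem norm_basisControl [DecidableEq ι] (a : ι × Bool) : ‖basisControl a‖ = 1 := by
  obtain ⟨i, _ | _⟩ := a <;> simp [basisControl, signed]

theorem controlField_basisControl [DecidableEq ι] (X : ι → E → E) (a : ι × Bool) :
    controlField X (basisControl a) = signed X a := by
  ext y
  obtain ⟨i, _ | _⟩ := a <;> simp [controlField, basisControl, signed, ite_smul]

end ControlAffine

section CrossSection

theorem isCrossSection_of_subsingleton {E U : Type*} [NormedAddCommGroup E] [NormedSpace ℝ E]
    [Subsingleton E] [NormedAddCommGroup U] (Φ : U → E → E) {p : ℝ≥0∞} [Fact (1 ≤ p)]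
    (W : Set E) : IsCrossSection (p := p) Φ W 0 0 where
  continuousOn_control := continuousOn_const
  continuousOn_time := continuousOn_const
  exists_isTrajectory _ _ _ _ :=
    ⟨le_rfl, 0, ⟨continuousOn_const, fun _ _ ↦ Subsingleton.elim _ _⟩, Subsingleton.elim _ _⟩
  diag _ _ := ⟨rfl, rfl⟩

theorem stmt14_general {ι E : Type*} [Fintype ι] [NormedAddCommGroup E] [NormedSpace ℝ E]
    [FiniteDimensional ℝ E] {p : ℝ≥0∞} [Fact (1 ≤ p)] (hp : p ≠ ⊤) {X : ι → E → E}
    (hX : ∀ i, ContDiff ℝ ∞ (X i)) (hXbdd : ∃ C, ∀ i y, ‖X i y‖ ≤ C)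
    (hXder : ∃ C, ∀ i y, ‖fderiv ℝ (X i) y‖ ≤ C) {x₀ : E}
    (hspan : Submodule.span ℝ {v | ∃ Y, IsLieMonomial X Y ∧ Y x₀ = v} = ⊤) :
    ∃ W, IsOpen W ∧ x₀ ∈ W ∧ ∃ σ τ, IsCrossSection (p := p) (controlField X) W σ τ := by
  classical
  have := FiniteDimensional.complete ℝ E
  rcases subsingleton_or_nontrivial E with _ | _
  · exact ⟨univ, isOpen_univ, mem_univ _, 0, 0, isCrossSection_of_subsingleton _ _⟩
  obtain ⟨C, hC⟩ := hXbdd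
  obtain ⟨L, hL⟩ := hXder
  choose F hF using exists_isFlow_signed (fun i ↦ (hX i).differentiable (by simp)) hC hL
  let Z (i : ι) : smoothMaps E := ⟨X i, mem_smoothMaps.2 (hX i)⟩
  have hsteer : Steerable F x₀ id := steerable_id (X := Z) (fun a ↦ by
    rw [← Submodule.subtype_apply, map_signed]; exact hF a) hspan
  obtain ⟨W, hW, hx₀, a, s, hs⟩ :=
    hsteer.exists_isSteering (fun a ↦ (hF a).continuous) fun a ↦ (hF a).map_zero
  have hbasis (a : ι × Bool) : IsFlow (controlField X (basisControl a)) (F a) := by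
    rw [controlField_basisControl]
    exact hF a
  have hcross := hs.isCrossSection (Φ := controlField X) hp
    (continuous_controlField fun i ↦ (hX i).continuous) (controlField_zero X)
    (fun w hw ↦ norm_controlField_le hC hw) (fun a ↦ (norm_basisControl a).le) hbasis
  exact ⟨W, hW, hx₀, _, _, hcross⟩

theorem IsIteratedBracket.isLieMonomial {n d : ℕ}
    {X : Fin d → EuclideanSpace ℝ (Fin n) → EuclideanSpace ℝ (Fin n)}
    {Y : EuclideanSpace ℝ (Fin n) → EuclideanSpace ℝ (Fin n)} (h : IsIteratedBracket X Y) :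
    IsLieMonomial X Y := by
  induction h with
  | base i => exact .of i
  | bracket Y Z _ _ hY hZ => exact .lieBracket hY hZ

end CrossSection

/-- the cross-section: for a bounded, globally Lipschitz, smooth,
bracket-generating family `X₁, …, X_d`, every point of `ℝⁿ` has an open neighborhood
`W` with continuous maps `σ : W × W → L^p([0,∞),ℝ^d)` and `τ : W × W → [0,∞)` such
that the trajectory of `σ(x,y)` starting at `x` reaches `y` at time `τ(x,y)`, and
`σ(x,x) = 0`, `τ(x,x) = 0`. -/
theorem stmt14 (n d : ℕ) (p : ℝ) (hp : 1 ≤ p) [Fact (1 ≤ ENNReal.ofReal p)]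
    (X : Fin d → EuclideanSpace ℝ (Fin n) → EuclideanSpace ℝ (Fin n))
    (hXsmooth : ∀ i, ContDiff ℝ (⊤ : ℕ∞) (X i))
    (hXbdd : ∃ C, ∀ i y, ‖X i y‖ ≤ C)
    (hXder : ∃ C, ∀ i y, ‖fderiv ℝ (X i) y‖ ≤ C)
    (hbg : BracketGenerating X)
    (x₀ : EuclideanSpace ℝ (Fin n)) :
    ∃ W : Set (EuclideanSpace ℝ (Fin n)), IsOpen W ∧ x₀ ∈ W ∧
      ∃ (σ : EuclideanSpace ℝ (Fin n) × EuclideanSpace ℝ (Fin n) →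
          Lp (EuclideanSpace ℝ (Fin d)) (ENNReal.ofReal p)
            (volume.restrict (Set.Ici (0:ℝ))))
        (τ : EuclideanSpace ℝ (Fin n) × EuclideanSpace ℝ (Fin n) → ℝ),
        ContinuousOn σ (W ×ˢ W) ∧ ContinuousOn τ (W ×ˢ W) ∧
        (∀ x ∈ W, ∀ y ∈ W, 0 ≤ τ (x, y) ∧
          ∃ γ, IsTrajectoryInf X x (⇑(σ (x, y))) γ ∧ γ (τ (x, y)) = y) ∧
        (∀ x ∈ W, σ (x, x) = 0 ∧ τ (x, x) = 0) := by
  have hspan : Submodule.span ℝ {v | ∃ Y, IsLieMonomial X Y ∧ Y x₀ = v} = ⊤ :=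
    top_le_iff.1 <| (hbg x₀).ge.trans <| Submodule.span_mono
      fun _ ⟨Y, hY, hv⟩ ↦ ⟨Y, hY.isLieMonomial, hv⟩
  obtain ⟨W, hW, hx₀, σ, τ, h⟩ :=
    stmt14_general (p := ENNReal.ofReal p) ENNReal.ofReal_ne_top hXsmooth hXbdd hXder hspan
  exact ⟨W, hW, hx₀, σ, τ, h.1, h.2, h.3, h.4⟩
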